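/- arXiv:1506.02517 — 5 statements merged into one kernel-verified Lean document; each statement's English description precedes it below -/
import Mathlib

section
/- Let Λ = {(x, y) ∈ ℤ² : x + 5y ≡ 0 (mod 13)}. Then for every real p with 1 ≤ p < ∞, the translates c + B_p²(2), c ∈ Λ, partition ℤ², where B_p²(2) = {x ∈ ℤ² : |x₁|^p + |x₂|^p ≤ 2^p}; that is, Λ is a linear 2-perfect code in ℤ² in the ℓ_p metric for every 1 ≤ p < ∞. -/
/-!
The lattice of pairs `(x, y)` with `r² + (r + 1)² ∣ x + (2r + 1)y` is spanned by the orthogonal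
vectors `(r + 1, r)` and `(-r, r + 1)`. In the coordinates `x + y` and `x - y` the `ℓ₁` norm becomes
a maximum, which shows that every nonzero lattice vector has `ℓ₁` norm at least `2r + 1`: distinct
translates of the `ℓ₁` ball of radius `r` are disjoint. Conversely, division with balanced remainder
brings every point into the square `[-r, r]²`, whose corners outside the `ℓ₁` ball are moved into it
by one of the four vectors `±(r + 1, r)`, `±(-r, r + 1)`. For `r = 2` the modulus is `13`, and
for `p ≥ 1` the `ℓ_p` ball of radius `2` has the same integer points as the `ℓ₁` ball.
-/

theorem exists_abs_sub_mul_le {r : ℤ} (hr : 0 ≤ r) (k : ℤ) : ∃ q, |k - (2 * r + 1) * q| ≤ r := by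
  refine ⟨(k + r) / (2 * r + 1), abs_le.2 ?_⟩
  have remainder_nonneg := Int.emod_nonneg (k + r) (show 2 * r + 1 ≠ 0 by omega)
  have remainder_lt := Int.emod_lt_of_pos (k + r) (show 0 < 2 * r + 1 by omega)
  have division := Int.emod_add_mul_ediv (k + r) (2 * r + 1)
  constructor <;> linarith

theorem eq_zero_of_abs_mul_add_lt {m s t : ℤ} (hst : 0 ≤ s * t) (h : |m * s + t| < m) : s = 0 := by
  have hm : 0 < m := (abs_nonneg _).trans_lt h
  have no_cancellation : |m * s + t| = |m * s| + |t| := by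
    refine (abs_add_eq_add_abs_iff _ _).2 (mul_nonneg_iff.1 ?_)
    exact mul_assoc m s t ▸ mul_nonneg hm.le hst
  have hms : m * |s| < m * 1 := by
    rw [mul_one]
    calc m * |s| = |m * s| := by rw [abs_mul, abs_of_pos hm]
      _ ≤ |m * s + t| := no_cancellation ▸ le_add_of_nonneg_right (abs_nonneg t)
      _ < m := h
  exact Int.abs_lt_one_iff.1 (lt_of_mul_lt_mul_left hms hm.le)

/-- The planar lattice underlying the Golomb–Welch perfect code of radius `r` in the `ℓ₁` metric,
cut out by a single congruence modulo the number `r ^ 2 + (r + 1) ^ 2` of integer points of the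
`ℓ₁` ball of radius `r`. -/
def golombWelchLattice (r : ℤ) : AddSubgroup (ℤ × ℤ) where
  carrier := {c | r ^ 2 + (r + 1) ^ 2 ∣ c.1 + (2 * r + 1) * c.2}
  zero_mem' := by simp
  add_mem' {c d} hc hd := by
    simpa only [Set.mem_ofPred_eq, Prod.fst_add, Prod.snd_add, mul_add, add_add_add_comm]
      using dvd_add hc hd
  neg_mem' {c} hc := by
    simpa only [Set.mem_ofPred_eq, Prod.fst_neg, Prod.snd_neg, mul_neg, neg_add] using hc.neg_right

namespace golombWelchLattice

variable {r : ℤ}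

theorem mem_iff {c : ℤ × ℤ} :
    c ∈ golombWelchLattice r ↔ r ^ 2 + (r + 1) ^ 2 ∣ c.1 + (2 * r + 1) * c.2 :=
  Iff.rfl

theorem mem_iff_exists_combination {c : ℤ × ℤ} :
    c ∈ golombWelchLattice r ↔ ∃ s t : ℤ, c = s • (r + 1, r) + t • (-r, r + 1) := by
  simp only [mem_iff, Prod.ext_iff, Prod.fst_add, Prod.snd_add, Prod.smul_mk, smul_eq_mul]
  constructor
  · rintro ⟨k, hk⟩
    exact ⟨(r + 1) * k - c.2, c.2 - r * k, by linear_combination hk, by ring⟩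
  · rintro ⟨s, t, hx, hy⟩
    exact ⟨s + t, by rw [hx, hy]; ring⟩

theorem eq_zero_of_abs_add_abs_le {c : ℤ × ℤ} (hc : c ∈ golombWelchLattice r)
    (hle : |c.1| + |c.2| ≤ 2 * r) : c = 0 := by
  obtain ⟨s, t, rfl⟩ := mem_iff_exists_combination.1 hc
  simp only [Prod.fst_add, Prod.snd_add, Prod.smul_mk, smul_eq_mul] at hle
  have hsum : |(2 * r + 1) * s + t| < 2 * r + 1 := by
    calc |(2 * r + 1) * s + t|
        = |(s * (r + 1) + t * -r) + (s * r + t * (r + 1))| := by ring_nf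
      _ ≤ |s * (r + 1) + t * -r| + |s * r + t * (r + 1)| := abs_add_le _ _
      _ < 2 * r + 1 := Int.lt_add_one_of_le hle
  have hdiff : |(2 * r + 1) * t + -s| < 2 * r + 1 := by
    calc |(2 * r + 1) * t + -s|
        = |(s * r + t * (r + 1)) - (s * (r + 1) + t * -r)| := by ring_nf
      _ ≤ |s * r + t * (r + 1)| + |s * (r + 1) + t * -r| := abs_sub _ _
      _ < 2 * r + 1 := by linarith
  obtain ⟨rfl, rfl⟩ : s = 0 ∧ t = 0 := by
    rcases le_total 0 (s * t) with hst | hst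
    · have hs := eq_zero_of_abs_mul_add_lt hst hsum
      exact ⟨hs, eq_zero_of_abs_mul_add_lt (by simp [hs]) hdiff⟩
    · have ht := eq_zero_of_abs_mul_add_lt (by linarith) hdiff
      exact ⟨eq_zero_of_abs_mul_add_lt (by simp [ht]) hsum, ht⟩
  simp

theorem exists_mem_abs_sub_le (hr : 0 ≤ r) (z : ℤ × ℤ) :
    ∃ c ∈ golombWelchLattice r, |z.1 - c.1| ≤ r ∧ |z.2 - c.2| ≤ r := by
  obtain ⟨m, hm, hdvd⟩ : ∃ m, |m| ≤ r ^ 2 + r ∧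
      r ^ 2 + (r + 1) ^ 2 ∣ z.1 + (2 * r + 1) * z.2 - m := by
    obtain ⟨k, hk⟩ := exists_abs_sub_mul_le (show 0 ≤ r ^ 2 + r by positivity)
      (z.1 + (2 * r + 1) * z.2)
    exact ⟨_, hk, k, by ring⟩
  obtain ⟨b, hb⟩ := exists_abs_sub_mul_le hr m
  have hlt : (2 * r + 1) * |b| < (2 * r + 1) * (r + 1) := by
    calc (2 * r + 1) * |b| = |(2 * r + 1) * b| := by
          rw [abs_mul, abs_of_nonneg (by positivity : 0 ≤ 2 * r + 1)]
      _ = |m - (m - (2 * r + 1) * b)| := by rw [sub_sub_cancel]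
      _ ≤ |m| + |m - (2 * r + 1) * b| := abs_sub _ _
      _ ≤ (r ^ 2 + r) + r := add_le_add hm hb
      _ < (2 * r + 1) * (r + 1) := by nlinarith
  refine ⟨(z.1 - (m - (2 * r + 1) * b), z.2 - b), ?_, ?_, ?_⟩
  · rw [mem_iff]
    convert hdvd using 1
    ring
  · rwa [sub_sub_cancel]
  · rw [sub_sub_cancel]
    exact Int.lt_add_one_iff.1 (lt_of_mul_lt_mul_left hlt (by positivity))

theorem exists_mem_abs_sub_add_abs_sub_le_of_abs_le {w : ℤ × ℤ} (hx : |w.1| ≤ r) (hy : |w.2| ≤ r) :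
    ∃ c ∈ golombWelchLattice r, |w.1 - c.1| + |w.2 - c.2| ≤ r := by
  by_cases hw : |w.1| + |w.2| ≤ r
  · exact ⟨0, zero_mem _, by simpa using hw⟩
  rcases le_total 0 w.1 with h1 | h1 <;> rcases le_total 0 w.2 with h2 | h2
  · exact ⟨(r + 1, r), mem_iff_exists_combination.2 ⟨1, 0, by simp⟩, by grind⟩
  · exact ⟨(r, -(r + 1)), mem_iff_exists_combination.2 ⟨0, -1, by simp⟩, by grind⟩
  · exact ⟨(-r, r + 1), mem_iff_exists_combination.2 ⟨0, 1, by simp⟩, by grind⟩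
  · exact ⟨(-(r + 1), -r), mem_iff_exists_combination.2 ⟨-1, 0, by simp⟩, by grind⟩

theorem exists_mem_abs_sub_add_abs_sub_le (hr : 0 ≤ r) (z : ℤ × ℤ) :
    ∃ c ∈ golombWelchLattice r, |z.1 - c.1| + |z.2 - c.2| ≤ r := by
  obtain ⟨c, hc, hx, hy⟩ := exists_mem_abs_sub_le hr z
  obtain ⟨d, hd, hle⟩ := exists_mem_abs_sub_add_abs_sub_le_of_abs_le (w := z - c) hx hy
  exact ⟨c + d, add_mem hc hd, by simpa [sub_sub] using hle⟩

theorem existsUnique_mem_abs_sub_add_abs_sub_le (hr : 0 ≤ r) (z : ℤ × ℤ) :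
    ∃! c, c ∈ golombWelchLattice r ∧ |z.1 - c.1| + |z.2 - c.2| ≤ r := by
  refine existsUnique_of_exists_of_unique (exists_mem_abs_sub_add_abs_sub_le hr z) ?_
  rintro c d ⟨hc, hcz⟩ ⟨hd, hdz⟩
  refine sub_eq_zero.1 (eq_zero_of_abs_add_abs_le (sub_mem hc hd) ?_)
  calc |c.1 - d.1| + |c.2 - d.2|
      ≤ (|c.1 - z.1| + |z.1 - d.1|) + (|c.2 - z.2| + |z.2 - d.2|) :=
        add_le_add (abs_sub_le _ _ _) (abs_sub_le _ _ _)
    _ = (|z.1 - c.1| + |z.2 - c.2|) + (|z.1 - d.1| + |z.2 - d.2|) := by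
        rw [abs_sub_comm c.1, abs_sub_comm c.2, add_add_add_comm]
    _ ≤ 2 * r := by linarith

end golombWelchLattice

theorem le_of_rpow_add_rpow_le {p x y r : ℝ} (hp : 0 < p) (hx : 0 ≤ x) (hy : 0 ≤ y) (hr : 0 ≤ r)
    (h : x ^ p + y ^ p ≤ r ^ p) : x ≤ r :=
  (Real.rpow_le_rpow_iff hx hr hp).1 ((le_add_of_nonneg_right (Real.rpow_nonneg hy p)).trans h)

theorem lt_of_rpow_add_rpow_le {p x y r : ℝ} (hp : 0 < p) (hx : 0 ≤ x) (hy : 0 < y) (hr : 0 ≤ r)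
    (h : x ^ p + y ^ p ≤ r ^ p) : x < r :=
  (Real.rpow_lt_rpow_iff hx hr hp).1
    ((lt_add_of_pos_right _ (Real.rpow_pos_of_pos hy p)).trans_le h)

theorem abs_add_abs_le_two_of_rpow_add_rpow_le {p : ℝ} (hp : 0 < p) {a b : ℤ}
    (h : |(a : ℝ)| ^ p + |(b : ℝ)| ^ p ≤ 2 ^ p) : |a| + |b| ≤ 2 := by
  have h' : |(b : ℝ)| ^ p + |(a : ℝ)| ^ p ≤ 2 ^ p := by rwa [add_comm]
  have ha : |a| ≤ 2 := by
    exact_mod_cast le_of_rpow_add_rpow_le hp (abs_nonneg _) (abs_nonneg _) zero_le_two h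
  have hb : |b| ≤ 2 := by
    exact_mod_cast le_of_rpow_add_rpow_le hp (abs_nonneg _) (abs_nonneg _) zero_le_two h'
  have ha_lt (hb0 : 0 < |b|) : |a| < 2 := by
    exact_mod_cast lt_of_rpow_add_rpow_le hp (abs_nonneg _) (by exact_mod_cast hb0) zero_le_two h
  have hb_lt (ha0 : 0 < |a|) : |b| < 2 := by
    exact_mod_cast lt_of_rpow_add_rpow_le hp (abs_nonneg _) (by exact_mod_cast ha0) zero_le_two h'
  omega

theorem rpow_add_rpow_le_of_add_le {p x y r : ℝ} (hp : 1 ≤ p) (hx : 0 ≤ x) (hy : 0 ≤ y)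
    (h : x + y ≤ r) : x ^ p + y ^ p ≤ r ^ p :=
  (Real.add_rpow_le_rpow_add hx hy hp).trans
    (Real.rpow_le_rpow (add_nonneg hx hy) h (zero_le_one.trans hp))

theorem abs_rpow_add_abs_rpow_le_two_rpow_iff {p : ℝ} (hp : 1 ≤ p) {a b : ℤ} :
    |(a : ℝ)| ^ p + |(b : ℝ)| ^ p ≤ 2 ^ p ↔ |a| + |b| ≤ 2 :=
  ⟨abs_add_abs_le_two_of_rpow_add_rpow_le (zero_lt_one.trans_le hp), fun h =>
    rpow_add_rpow_le_of_add_le hp (abs_nonneg _) (abs_nonneg _) (by exact_mod_cast h)⟩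

/-- The lattice `Λ = {(x,y) ∈ ℤ² : 13 ∣ x + 5y}` is a linear `2`-perfect code in `ℤ²` in
the `ℓ_p` metric for every real `1 ≤ p < ∞`: the translates of
`B_p²(2) = {x ∈ ℤ² : |x₁|^p + |x₂|^p ≤ 2^p}` by elements of `Λ` partition `ℤ²`. -/
theorem perfect_code_13 (p : ℝ) (hp : 1 ≤ p) :
    ∀ z : ℤ × ℤ, ∃! c : ℤ × ℤ, ((13 : ℤ) ∣ c.1 + 5 * c.2) ∧
      (|z.1 - c.1| : ℝ) ^ p + (|z.2 - c.2| : ℝ) ^ p ≤ 2 ^ p := by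
  intro z
  simp only [← Int.cast_sub, abs_rpow_add_abs_rpow_le_two_rpow_iff hp]
  exact golombWelchLattice.existsUnique_mem_abs_sub_add_abs_sub_le zero_le_two z
end

section
/- Let Λ = {(x, y, z) ∈ ℤ³ : x + 3y + 9z ≡ 0 (mod 27)}. Then the ℓ_2 ball B₂³(√3) = {x ∈ ℤ³ : x₁² + x₂² + x₃² ≤ 3} equals the cube {−1, 0, 1}³, and the translates c + B₂³(√3), c ∈ Λ, partition ℤ³; that is, Λ is a linear √3-perfect code in ℤ³ in the ℓ_2 metric (equivalently, a 1-perfect code in the ℓ_∞ metric). -/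
/-! The homomorphism `d ↦ ∑ i, bⁱ dᵢ` from `ℤⁿ` to `ℤ/bⁿ`, with `b = 2r + 1` odd, is injective on
the cube `{-r, …, r}ⁿ`: reading a relation modulo `b` forces its digits to vanish one after the
other. The cube has `bⁿ` points, so it maps bijectively onto `ℤ/bⁿ` and is a system of
representatives for the cosets of the kernel. For `r = 1` and `n ≤ 3` the cube is also the `ℓ_2`
ball of radius `√n`, because a coordinate of absolute value at least `2` contributes `4 > n`. -/

theorem sum_sq_le_card_iff_abs_le_one {ι : Type*} [Fintype ι] (hι : Fintype.card ι ≤ 3)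
    (x : ι → ℤ) : ∑ i, x i ^ 2 ≤ Fintype.card ι ↔ ∀ i, |x i| ≤ 1 := by
  constructor
  · intro hx i
    have sq_le_sum : x i ^ 2 ≤ ∑ j, x j ^ 2 :=
      Finset.single_le_sum (fun j _ => sq_nonneg (x j)) (Finset.mem_univ i)
    have sq_lt : x i ^ 2 < 2 ^ 2 := by lia
    exact Int.lt_add_one_iff.mp (abs_lt_of_sq_lt_sq sq_lt zero_le_two)
  · intro hx
    calc ∑ i, x i ^ 2 ≤ ∑ _i : ι, 1 :=
          Finset.sum_le_sum fun i _ => (sq_le_one_iff_abs_le_one (x i)).mpr (hx i)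
      _ = Fintype.card ι := by simp

theorem isComplement_ker_of_injOn_of_surjOn {G H : Type*} [AddGroup G] [AddZeroClass H]
    {φ : G →+ H} {B : Set G} (hinj : Set.InjOn φ B) (hsurj : Set.SurjOn φ B (Set.range φ)) :
    AddSubgroup.IsComplement (φ.ker : Set G) B := by
  rw [AddSubgroup.isComplement_iff_existsUnique_neg_add_mem]
  intro g
  obtain ⟨b, hb, hbg⟩ := hsurj ⟨g, rfl⟩
  have sub_mem_ker : g - b ∈ φ.ker := by
    rw [AddMonoidHom.mem_ker, sub_eq_add_neg, map_add, ← hbg, ← map_add, add_neg_cancel, map_zero]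
  refine ⟨⟨g - b, sub_mem_ker⟩, by simpa using hb, fun s hs => Subtype.ext ?_⟩
  have map_neg_add : φ (-(s : G) + g) = φ g := by
    rw [map_add, AddMonoidHom.mem_ker.mp (neg_mem s.2), zero_add]
  have neg_add_eq : -(s : G) + g = b := hinj hs hb (map_neg_add.trans hbg.symm)
  exact eq_sub_of_add_eq (neg_add_eq_iff_eq_add.mp neg_add_eq).symm

/-- The closed ball of radius `r` about the origin of `ℤⁿ` in the `ℓ_∞` metric. -/
noncomputable def cube (n r : ℕ) : Finset (Fin n → ℤ) :=
  Fintype.piFinset fun _ => Finset.Icc (-r) r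

theorem mem_cube {n r : ℕ} {x : Fin n → ℤ} : x ∈ cube n r ↔ ∀ i, |x i| ≤ r := by
  simp [cube, abs_le]

theorem card_cube (n r : ℕ) : (cube n r).card = (2 * r + 1) ^ n := by
  have card_Icc : (Finset.Icc (-r : ℤ) r).card = 2 * r + 1 := by
    rw [Int.card_Icc]
    lia
  rw [cube, Fintype.card_piFinset_const, card_Icc]

theorem eq_zero_of_pow_dvd_sum_pow_mul {b : ℤ} {n : ℕ} {e : Fin n → ℤ} (he : ∀ i, |e i| < b)
    (hdvd : b ^ n ∣ ∑ i : Fin n, b ^ (i : ℕ) * e i) : e = 0 := by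
  induction n with
  | zero => exact Subsingleton.elim _ _
  | succ n ih =>
    have sum_eq : ∑ i : Fin (n + 1), b ^ (i : ℕ) * e i =
        e 0 + b * ∑ i : Fin n, b ^ (i : ℕ) * Fin.tail e i := by
      simp [Fin.sum_univ_succ, Finset.mul_sum, pow_succ', mul_assoc, Fin.tail]
    rw [sum_eq, pow_succ'] at hdvd
    have head_eq : e 0 = 0 :=
      Int.eq_zero_of_abs_lt_dvd ((Int.dvd_add_left (dvd_mul_right b _)).mp
        (dvd_of_mul_right_dvd hdvd)) (he 0)
    have b_ne : b ≠ 0 := ((abs_nonneg _).trans_lt (he 0)).ne'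
    rw [head_eq, zero_add, mul_dvd_mul_iff_left b_ne] at hdvd
    have tail_eq : Fin.tail e = 0 := ih (fun i => he i.succ) hdvd
    exact funext (Fin.cases head_eq (congrFun tail_eq))

/-- The evaluation homomorphism `d ↦ ∑ i, bⁱ dᵢ` modulo `bⁿ` of base-`b` digit strings, least
significant digit first. Its kernel is the lattice of the code. -/
def digitHom (b n : ℕ) : (Fin n → ℤ) →+ ZMod (b ^ n) where
  toFun d := ((∑ i : Fin n, (b : ℤ) ^ (i : ℕ) * d i : ℤ) : ZMod (b ^ n))
  map_zero' := by simp
  map_add' d e := by simp [mul_add, Finset.sum_add_distrib]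

theorem mem_ker_digitHom {b n : ℕ} {d : Fin n → ℤ} :
    d ∈ (digitHom b n).ker ↔ (b : ℤ) ^ n ∣ ∑ i : Fin n, (b : ℤ) ^ (i : ℕ) * d i := by
  rw [AddMonoidHom.mem_ker, ← Nat.cast_pow]
  exact ZMod.intCast_zmod_eq_zero_iff_dvd _ _

theorem injOn_digitHom_cube (n r : ℕ) : Set.InjOn (digitHom (2 * r + 1) n) (cube n r) := by
  intro d hd d' hd' heq
  rw [Finset.mem_coe, mem_cube] at hd hd'
  have sub_mem_ker : d - d' ∈ (digitHom (2 * r + 1) n).ker := by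
    rw [AddMonoidHom.mem_ker, map_sub, heq, sub_self]
  have abs_sub_lt (i : Fin n) : |(d - d') i| < (2 * r + 1 : ℕ) := by
    have := (abs_sub (d i) (d' i)).trans (add_le_add (hd i) (hd' i))
    rw [Pi.sub_apply]
    lia
  exact sub_eq_zero.mp (eq_zero_of_pow_dvd_sum_pow_mul abs_sub_lt (mem_ker_digitHom.mp sub_mem_ker))

theorem surjOn_digitHom_cube (n r : ℕ) :
    Set.SurjOn (digitHom (2 * r + 1) n) (cube n r) Set.univ := by
  have card_le : (Finset.univ : Finset (ZMod ((2 * r + 1) ^ n))).card ≤ (cube n r).card := by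
    rw [Finset.card_univ, ZMod.card, card_cube]
  simpa using Finset.surjOn_of_injOn_of_card_le _ (fun _ _ => Finset.mem_univ _)
    (injOn_digitHom_cube n r) card_le

theorem isComplement_ker_digitHom_cube (n r : ℕ) :
    AddSubgroup.IsComplement ((digitHom (2 * r + 1) n).ker : Set (Fin n → ℤ)) (cube n r) :=
  isComplement_ker_of_injOn_of_surjOn (injOn_digitHom_cube n r)
    ((surjOn_digitHom_cube n r).mono subset_rfl (Set.subset_univ _))

theorem existsUnique_pow_dvd_sum_and_abs_sub_le {n : ℕ} (r : ℕ) (z : Fin n → ℤ) :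
    ∃! c : Fin n → ℤ, (2 * r + 1 : ℤ) ^ n ∣ ∑ i : Fin n, (2 * r + 1 : ℤ) ^ (i : ℕ) * c i ∧
      ∀ i, |z i - c i| ≤ r := by
  have code_iff (c : Fin n → ℤ) :
      ((2 * r + 1 : ℤ) ^ n ∣ ∑ i : Fin n, (2 * r + 1 : ℤ) ^ (i : ℕ) * c i ∧
        ∀ i, |z i - c i| ≤ r) ↔
      c ∈ (digitHom (2 * r + 1) n).ker ∧ -c + z ∈ cube n r := by
    rw [mem_ker_digitHom, mem_cube, neg_add_eq_sub]
    simp only [Nat.cast_add, Nat.cast_mul, Nat.cast_ofNat, Nat.cast_one, Pi.sub_apply]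
  simp only [code_iff]
  obtain ⟨c, hc, hc_unique⟩ := AddSubgroup.isComplement_iff_existsUnique_neg_add_mem.mp
    (isComplement_ker_digitHom_cube n r) z
  exact ⟨c, ⟨c.2, hc⟩, fun c' ⟨hker, hcube⟩ =>
    congrArg Subtype.val (hc_unique ⟨c', hker⟩ hcube)⟩

theorem perfect_code_27_general {n : ℕ} (hn : n ≤ 3) :
    ({x : Fin n → ℤ | ∑ i, x i ^ 2 ≤ n} = {x : Fin n → ℤ | ∀ i, |x i| ≤ 1}) ∧
    ∀ z : Fin n → ℤ, ∃! c : Fin n → ℤ,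
      (3 : ℤ) ^ n ∣ ∑ i : Fin n, 3 ^ (i : ℕ) * c i ∧ ∑ i, (z i - c i) ^ 2 ≤ n := by
  have ball_iff_cube (x : Fin n → ℤ) : ∑ i, x i ^ 2 ≤ n ↔ ∀ i, |x i| ≤ 1 := by
    simpa using sum_sq_le_card_iff_abs_le_one (by simpa using hn) x
  refine ⟨Set.ext ball_iff_cube, fun z => ?_⟩
  simpa [ball_iff_cube fun i => z i - _] using existsUnique_pow_dvd_sum_and_abs_sub_le 1 z

/-- The `ℓ_2` ball `B₂³(√3)` in `ℤ³` is the cube `{−1,0,1}³`, and the lattice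
`Λ = {(x,y,z) ∈ ℤ³ : 27 ∣ x + 3y + 9z}` is a linear `√3`-perfect code in `ℤ³` in the
`ℓ_2` metric (equivalently, a `1`-perfect code in the `ℓ_∞` metric): the translates of
`B₂³(√3)` by elements of `Λ` partition `ℤ³`. -/
theorem perfect_code_27 :
    ({x : Fin 3 → ℤ | (x 0) ^ 2 + (x 1) ^ 2 + (x 2) ^ 2 ≤ 3} =
      {x : Fin 3 → ℤ | ∀ i, |x i| ≤ 1}) ∧
    ∀ z : Fin 3 → ℤ, ∃! c : Fin 3 → ℤ,
      ((27 : ℤ) ∣ c 0 + 3 * c 1 + 9 * c 2) ∧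
      (z 0 - c 0) ^ 2 + (z 1 - c 1) ^ 2 + (z 2 - c 2) ^ 2 ≤ 3 := by
  simpa [Fin.sum_univ_three] using perfect_code_27_general le_rfl (n := 3)
end

section
/- Let r ≥ 3 be an integer and p a real number with 1 < p < ∞ such that (r−1)^p + 2^p ≤ r^p. Then there is no set C ⊆ ℤ² such that the translates c + B_p²(r), c ∈ C, partition ℤ² (equivalently, the polyomino T_p²(r), the union of unit squares centered at the points of B_p²(r), does not tile ℝ²). -/
/-!
Put a tile at the origin and look at its upper tip `(0, r)`, which is alone in its row while the
row below contains the five points around `(0, r - 1)`. The cells `(1, r)` and `(-1, r)` are covered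
by other tiles. Two tips cannot stand side by side, since they leave next to them a pocket that only
a third tip could enter, and it does not fit; so both tiles meet the upper tip in a corner whose
horizontal edge has length at least two (a *flat corner*). The cell `(0, r + 1)` above the tip
cannot belong to yet another tile, which again would have a tip there without room for it, so one of
the two corner tiles extends over it. The boundary of the other one then drops by at least two next
to its corner, and it covers `(-1, r + 2)`, where the first tile cannot go. As unit moves along
antidiagonals towards the diagonal do not leave a ball, all this forces the second corner to lie on
the diagonal and the first within one such move of it, and then one of the two corners, viewed in a
single ball, contradicts the other.
-/

section Complement

variable {G H : Type*} [AddCommGroup G] [AddCommGroup H] {B C : Set G}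

theorem isComplement_iff_existsUnique_sub_mem :
    AddSubgroup.IsComplement C B ↔ ∀ z, ∃! c, c ∈ C ∧ z - c ∈ B := by
  rw [AddSubgroup.isComplement_iff_existsUnique_neg_add_mem]
  refine forall_congr' fun z => ?_
  simp only [neg_add_eq_sub, ExistsUnique, Subtype.exists, Subtype.forall, Subtype.mk.injEq,
    exists_prop, and_imp, and_assoc]

theorem isComplement_preimage_addEquiv (e : H ≃+ G) (hC : AddSubgroup.IsComplement C B) :
    AddSubgroup.IsComplement (e ⁻¹' C) (e ⁻¹' B) := by
  rw [isComplement_iff_existsUnique_sub_mem] at hC ⊢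
  intro z
  refine (e.toEquiv.existsUnique_congr fun c => ?_).2 (hC (e z))
  simp

theorem isComplement_preimage_add_right (g : G) (hC : AddSubgroup.IsComplement C B) :
    AddSubgroup.IsComplement ((· + g) ⁻¹' C) B := by
  rw [isComplement_iff_existsUnique_sub_mem] at hC ⊢
  intro z
  refine ((Equiv.addRight g).existsUnique_congr fun c => ?_).2 (hC (z + g))
  simp

end Complement

section Tile

variable {B C : Set (ℤ × ℤ)}

theorem exists_tile_mem (hC : AddSubgroup.IsComplement C B) (x y : ℤ) :
    ∃ u v, (u, v) ∈ C ∧ (x - u, y - v) ∈ B := by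
  obtain ⟨⟨u, v⟩, h, -⟩ := isComplement_iff_existsUnique_sub_mem.1 hC (x, y)
  exact ⟨u, v, h⟩

theorem notMem_tile_of_ne (hC : AddSubgroup.IsComplement C B) {u v u' v' : ℤ} (hc : (u, v) ∈ C)
    (hc' : (u', v') ∈ C) (hne : ¬ (u = u' ∧ v = v')) (x y : ℤ) (h : (x - u, y - v) ∈ B) :
    (x - u', y - v') ∉ B := fun h' =>
  hne <| by simpa using (isComplement_iff_existsUnique_sub_mem.1 hC (x, y)).unique ⟨hc, h⟩ ⟨hc', h'⟩

end Tile

/-- A set of lattice points shaped like a ball of a norm invariant under the symmetries of the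
square: it is stable under swapping the coordinates, under decreasing their absolute values, and
under moving one unit from the larger to the smaller coordinate. Absolute values are taken in `ℕ`
so that linear arithmetic over the integers applies to them. -/
structure IsSymmetricBall (B : Set (ℤ × ℤ)) : Prop where
  swap : ∀ {x y}, (x, y) ∈ B → (y, x) ∈ B
  mono : ∀ {x y x' y'}, (x, y) ∈ B → x'.natAbs ≤ x.natAbs → y'.natAbs ≤ y.natAbs → (x', y') ∈ B
  transfer : ∀ {x y}, (x, y) ∈ B → 0 ≤ y → y < x → (x - 1, y + 1) ∈ B

/-- A symmetric ball whose extreme column, at abscissa `r`, is the single point `(r, 0)`, while the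
column next to it has at least five points. -/
structure IsPointedBall (r : ℤ) (B : Set (ℤ × ℤ)) : Prop extends IsSymmetricBall B where
  tip : (r, 0) ∈ B
  beside_tip : (r, 1) ∉ B
  next_column : (r - 1, 2) ∈ B

/-- The point `(a, b)` of the open first quadrant ends its row in `B`, and the row above it is
shorter by at least two: the boundary of `B` turns there into a horizontal edge of length at least
two. -/
structure IsFlatCorner (B : Set (ℤ × ℤ)) (a b : ℤ) : Prop where
  fst_pos : 0 < a
  snd_pos : 0 < b
  mem : (a, b) ∈ B
  right_notMem : (a + 1, b) ∉ B
  diag_notMem : (a - 1, b + 1) ∉ B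

namespace IsSymmetricBall

variable {r a b a' b' x y : ℤ} {B C : Set (ℤ × ℤ)}

theorem fst_nonneg (hB : IsSymmetricBall B) (h : (x, y) ∈ B) (hright : (x + 1, y) ∉ B) :
    0 ≤ x := by
  by_contra hx
  exact hright (hB.mono h (by omega) le_rfl)

theorem snd_nonneg (hB : IsSymmetricBall B) (h : (x, y) ∈ B) (hup : (x, y + 1) ∉ B) : 0 ≤ y :=
  hB.fst_nonneg (hB.swap h) fun h' => hup (hB.swap h')

theorem snd_eq_zero (hB : IsSymmetricBall B) (h : (x, y) ∈ B) (hup : (x, y + 1) ∉ B)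
    (hdown : (x, y - 1) ∉ B) : y = 0 := by
  have hy := hB.snd_nonneg h hup
  by_contra hne
  exact hdown (hB.mono h le_rfl (by omega))

theorem isComplement_preimage_neg_fst (hB : IsSymmetricBall B)
    (hC : AddSubgroup.IsComplement C B) :
    AddSubgroup.IsComplement {c : ℤ × ℤ | (-c.1, c.2) ∈ C} B := by
  let reflection := (AddEquiv.neg ℤ).prodCongr (AddEquiv.refl ℤ)
  have hinvariant : reflection ⁻¹' B = B := Set.ext fun _ =>
    ⟨fun h => hB.mono h (by simp) le_rfl, fun h => hB.mono h (by simp) le_rfl⟩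
  exact hinvariant ▸ isComplement_preimage_addEquiv reflection hC

theorem fst_le_snd_of_isFlatCorner (hB : IsSymmetricBall B) (h : IsFlatCorner B a b) :
    a ≤ b := by
  by_contra! hlt
  exact h.diag_notMem (hB.transfer h.mem h.snd_pos.le hlt)

theorem snd_le_fst_of_step_notMem (hB : IsSymmetricBall B) (ha : 0 ≤ a) (h : (a, b) ∈ B)
    (hstep : (a + 1, b - 1) ∉ B) : b ≤ a := by
  by_contra! hlt
  exact hstep (hB.swap (hB.transfer (hB.swap h) ha hlt))

/-- Otherwise `a' = b'` and `a ≤ b ≤ a + 2`, so that each position of `b` relative to `a' + 1` makes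
one corner put into `B` a point that the other excludes. -/
theorem step_mem_of_isFlatCorner (hB : IsSymmetricBall B) (h : IsFlatCorner B a b)
    (h' : IsFlatCorner B a' b') (hstep : (a + 1, b - 1) ∈ B) (hstep₂ : (a + 2, b - 2) ∉ B) :
    (a' + 1, b' - 1) ∈ B := by
  by_contra hstep'
  have ha := h.fst_pos
  have ha' := h'.fst_pos
  have hab : a ≤ b := hB.fst_le_snd_of_isFlatCorner h
  have hba : b - 1 ≤ a + 1 := hB.snd_le_fst_of_step_notMem (by omega) hstep <| by
    rwa [add_assoc, sub_sub]
  obtain rfl : a' = b' := (hB.fst_le_snd_of_isFlatCorner h').antisymm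
    (hB.snd_le_fst_of_step_notMem ha'.le h'.mem hstep')
  rcases lt_trichotomy (a' + 1) b with hlt | heq | hgt
  · exact h'.right_notMem (hB.mono hstep (by omega) (by omega))
  · exact hstep' (hB.mono (hB.swap h.mem) (by omega) (by omega))
  · rcases eq_or_ne a a' with rfl | hne
    · exact hstep' (hB.mono hstep le_rfl (by omega))
    · exact h.right_notMem (hB.mono h'.mem (by omega) (by omega))

/-- `(a + 1, b - 1)` is the position of the cell `(0, r + 1)` in the tile at `(1 + a, r + b)`,
up to sign. -/
theorem step_notMem_of_isFlatCorner (hB : IsSymmetricBall B)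
    (hC : AddSubgroup.IsComplement C B) (h : IsFlatCorner B a b) (hc : (1 + a, r + b) ∈ C)
    (h' : IsFlatCorner B a' b') (hc' : (-(1 + a'), r + b') ∈ C) : (a + 1, b - 1) ∉ B := by
  intro hstep
  have ha := h.fst_pos
  have ha' := h'.fst_pos
  have hb' := h'.snd_pos
  have hne : ¬ (-(1 + a') = 1 + a ∧ r + b' = r + b) := by omega
  have hstep₂ : (a + 2, b - 2) ∉ B := fun hmem =>
    notMem_tile_of_ne hC hc' hc hne (-1) (r + 2) (hB.mono h'.mem (by omega) (by omega))
      (hB.mono hmem (by omega) (by omega))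
  have hstep' : (a' + 1, b' - 1) ∈ B := hB.step_mem_of_isFlatCorner h h' hstep hstep₂
  exact notMem_tile_of_ne hC hc' hc hne 0 (r + 1) (hB.mono hstep' (by omega) (by omega))
    (hB.mono hstep (by omega) (by omega))

end IsSymmetricBall

namespace IsPointedBall

variable {r a b a' b' x y : ℤ} {B C : Set (ℤ × ℤ)}

theorem three_le (hB : IsPointedBall r B) : 3 ≤ r := by
  have hr₀ : 0 < r := by
    by_contra! hr
    exact hB.beside_tip (hB.mono hB.next_column (by omega) (by omega))
  have hr₁ : r ≠ 1 := by
    rintro rfl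
    exact hB.beside_tip (hB.transfer (hB.swap hB.next_column) (by omega) (by omega))
  have hr₂ : r ≠ 2 := by
    rintro rfl
    exact hB.beside_tip (hB.swap hB.next_column)
  omega

theorem upper_tip (hB : IsPointedBall r B) : (0, r) ∈ B := hB.swap hB.tip

theorem beside_upper_tip (hB : IsPointedBall r B) : (1, r) ∉ B := fun h => hB.beside_tip (hB.swap h)

theorem next_row (hB : IsPointedBall r B) : (2, r - 1) ∈ B := hB.swap hB.next_column

theorem beyond_tip (hB : IsPointedBall r B) : (r + 1, 0) ∉ B := fun h => by
  have hr := hB.three_le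
  exact hB.beside_tip (by simpa using hB.transfer h le_rfl (by omega))

theorem eq_radius_of_mem_axis (hB : IsPointedBall r B) (h : (x, 0) ∈ B)
    (hright : (x + 1, 0) ∉ B) : x = r := by
  have hr := hB.three_le
  have hx := hB.fst_nonneg h hright
  rcases lt_trichotomy x r with hlt | heq | hgt
  · exact absurd (hB.mono hB.tip (by omega) le_rfl) hright
  · exact heq
  · exact absurd (hB.mono h (by omega) le_rfl) hB.beyond_tip

/-- A point with three neighbours outside is a tip, so the column next to it is long. -/
theorem diag_mem_of_neighbors_notMem (hB : IsPointedBall r B) (h : (x, y) ∈ B)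
    (hright : (x + 1, y) ∉ B) (hup : (x, y + 1) ∉ B) (hdown : (x, y - 1) ∉ B) :
    (x - 1, y - 1) ∈ B := by
  obtain rfl := hB.snd_eq_zero h hup hdown
  obtain rfl := hB.eq_radius_of_mem_axis h hright
  exact hB.mono hB.next_column le_rfl (by omega)

theorem snd_pos_of_notMem (hB : IsPointedBall r B) (h : (a, b) ∈ B) (hright : (a + 1, b) ∉ B)
    (hup : (a, b + 1) ∉ B) (hdiag : (a - 1, b + 1) ∉ B) : 0 < b := by
  refine (hB.snd_nonneg h hup).lt_of_ne ?_
  rintro rfl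
  obtain rfl := hB.eq_radius_of_mem_axis h hright
  exact hdiag (hB.mono hB.next_column le_rfl (by omega))

/-- The tile at `(1, r + r)` would have its lower tip at `(1, r)`, beside the upper tip `(0, r)`
of the tile at the origin; the cell `(-1, r)` is then a pocket that no tile can fill. -/
theorem adjacent_tip_notMem (hB : IsPointedBall r B) (hC : AddSubgroup.IsComplement C B)
    (h₀ : (0, 0) ∈ C) : (1, r + r) ∉ C := by
  intro h₁
  obtain ⟨s, t, hst, hmem⟩ := exists_tile_mem hC (-1) r
  have hne₀ : ¬ (0 = s ∧ 0 = t) := by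
    rintro ⟨rfl, rfl⟩
    exact hB.beside_upper_tip (hB.mono hmem (by omega) (by omega))
  have hne₁ : ¬ (1 = s ∧ r + r = t) := by
    rintro ⟨rfl, rfl⟩
    exact hB.beside_upper_tip (hB.mono hmem (by omega) (by omega))
  have hright : (0 - s, r - t) ∉ B :=
    notMem_tile_of_ne hC h₀ hst hne₀ 0 r (hB.mono hB.upper_tip (by omega) (by omega))
  have hup : (-1 - s, r + 1 - t) ∉ B :=
    notMem_tile_of_ne hC h₁ hst hne₁ (-1) (r + 1) (hB.mono hB.next_row (by omega) (by omega))
  have hdown : (-1 - s, r - 1 - t) ∉ B :=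
    notMem_tile_of_ne hC h₀ hst hne₀ (-1) (r - 1) (hB.mono hB.next_row (by omega) (by omega))
  have hdiag : (-2 - s, r - 1 - t) ∉ B :=
    notMem_tile_of_ne hC h₀ hst hne₀ (-2) (r - 1) (hB.mono hB.next_row (by omega) (by omega))
  have hmem' : (-1 - s - 1, r - t - 1) ∈ B := hB.diag_mem_of_neighbors_notMem hmem
    (fun h => hright (hB.mono h (by omega) le_rfl))
    (fun h => hup (hB.mono h le_rfl (by omega)))
    (fun h => hdown (hB.mono h le_rfl (by omega)))
  exact hdiag (hB.mono hmem' (by omega) (by omega))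

theorem exists_isFlatCorner (hB : IsPointedBall r B) (hC : AddSubgroup.IsComplement C B)
    (h₀ : (0, 0) ∈ C) : ∃ a b, IsFlatCorner B a b ∧ (1 + a, r + b) ∈ C := by
  obtain ⟨u, v, huv, hmem⟩ := exists_tile_mem hC 1 r
  obtain ⟨a, rfl⟩ : ∃ a, u = 1 + a := ⟨u - 1, by ring⟩
  obtain ⟨b, rfl⟩ : ∃ b, v = r + b := ⟨v - r, by ring⟩
  have hne : ¬ (0 = 1 + a ∧ 0 = r + b) := fun ⟨_, _⟩ =>
    hB.beside_upper_tip (hB.mono hmem (by omega) (by omega))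
  have hab : (a, b) ∈ B := hB.mono hmem (by omega) (by omega)
  have hright : (a + 1, b) ∉ B := fun h =>
    notMem_tile_of_ne hC h₀ huv hne 0 r (hB.mono hB.upper_tip (by omega) (by omega))
      (hB.mono h (by omega) (by omega))
  have hup : (a, b + 1) ∉ B := fun h =>
    notMem_tile_of_ne hC h₀ huv hne 1 (r - 1) (hB.mono hB.next_row (by omega) (by omega))
      (hB.mono h (by omega) (by omega))
  have hdiag : (a - 1, b + 1) ∉ B := fun h =>
    notMem_tile_of_ne hC h₀ huv hne 2 (r - 1) (hB.mono hB.next_row (by omega) (by omega))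
      (hB.mono h (by omega) (by omega))
  have ha : a ≠ 0 := by
    rintro rfl
    obtain rfl := hB.eq_radius_of_mem_axis (hB.swap hab) fun h => hup (hB.swap h)
    exact hB.adjacent_tip_notMem hC h₀ huv
  exact ⟨a, b, ⟨(hB.fst_nonneg hab hright).lt_of_ne' ha, hB.snd_pos_of_notMem hab hright hup hdiag,
    hab, hright, hdiag⟩, huv⟩

/-- If neither corner tile covers the cell `(0, r + 1)`, this cell is a pocket above the tip,
which a further tile could enter only with its lower tip. -/
theorem step_mem_of_isFlatCorner_pair (hB : IsPointedBall r B)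
    (hC : AddSubgroup.IsComplement C B) (h₀ : (0, 0) ∈ C)
    (h : IsFlatCorner B a b) (hc : (1 + a, r + b) ∈ C)
    (h' : IsFlatCorner B a' b') (hc' : (-(1 + a'), r + b') ∈ C) :
    (a + 1, b - 1) ∈ B ∨ (a' + 1, b' - 1) ∈ B := by
  by_contra! ⟨hstep, hstep'⟩
  have hb := h.snd_pos
  have hb' := h'.snd_pos
  obtain ⟨s, t, hst, hmem⟩ := exists_tile_mem hC 0 (r + 1)
  have hne₀ : ¬ (0 = s ∧ 0 = t) := by
    rintro ⟨rfl, rfl⟩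
    exact hB.beyond_tip (hB.swap (hB.mono hmem (by omega) (by omega)))
  have hne : ¬ (1 + a = s ∧ r + b = t) := by
    rintro ⟨rfl, rfl⟩
    exact hstep (hB.mono hmem (by omega) (by omega))
  have hne' : ¬ (-(1 + a') = s ∧ r + b' = t) := by
    rintro ⟨rfl, rfl⟩
    exact hstep' (hB.mono hmem (by omega) (by omega))
  have hbelow : (0 - s, r - t) ∉ B :=
    notMem_tile_of_ne hC h₀ hst hne₀ 0 r (hB.mono hB.upper_tip (by omega) (by omega))
  have hleft : (-1 - s, r + 1 - t) ∉ B :=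
    notMem_tile_of_ne hC hc' hst hne' (-1) (r + 1) (hB.mono h'.mem (by omega) (by omega))
  have hright : (1 - s, r + 1 - t) ∉ B :=
    notMem_tile_of_ne hC hc hst hne 1 (r + 1) (hB.mono h.mem (by omega) (by omega))
  have hdiag : (1 - s, r + 2 - t) ∉ B :=
    notMem_tile_of_ne hC hc hst hne 1 (r + 2) (hB.mono h.mem (by omega) (by omega))
  have hmem' : (t - (r + 1) - 1, s - 1) ∈ B :=
    hB.diag_mem_of_neighbors_notMem (hB.swap (hB.mono hmem (by omega) (by omega)))
      (fun h => hbelow (hB.mono (hB.swap h) (by omega) (by omega)))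
      (fun h => hleft (hB.mono (hB.swap h) (by omega) (by omega)))
      (fun h => hright (hB.mono (hB.swap h) (by omega) (by omega)))
  exact hdiag (hB.mono (hB.swap hmem') (by omega) (by omega))

theorem not_isComplement_of_zero_mem (hB : IsPointedBall r B) (h₀ : (0, 0) ∈ C) :
    ¬ AddSubgroup.IsComplement C B := by
  intro hC
  have hC' := hB.isComplement_preimage_neg_fst hC
  obtain ⟨a, b, h, hc⟩ := hB.exists_isFlatCorner hC h₀
  obtain ⟨a', b', h', hc'⟩ := hB.exists_isFlatCorner hC' (by simpa using h₀)
  rcases hB.step_mem_of_isFlatCorner_pair hC h₀ h hc h' hc' with hstep | hstep'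
  · exact hB.step_notMem_of_isFlatCorner hC h hc h' hc' hstep
  · exact hB.step_notMem_of_isFlatCorner hC' h' hc' h (by simpa using hc) hstep'

theorem not_isComplement (hB : IsPointedBall r B) : ¬ AddSubgroup.IsComplement C B := by
  intro hC
  obtain ⟨c, hc⟩ := hC.nonempty_left
  refine hB.not_isComplement_of_zero_mem ?_ (isComplement_preimage_add_right c hC)
  rwa [Set.mem_preimage, Prod.mk_zero_zero, zero_add]

end IsPointedBall

section Convex

theorem map_sub_add_map_add_le_of_convexOn {𝕜 : Type*} [Field 𝕜] [LinearOrder 𝕜]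
    [IsStrictOrderedRing 𝕜] {s : Set 𝕜} {f : 𝕜 → 𝕜} (hf : ConvexOn 𝕜 s f) {x y t : 𝕜}
    (hx : x ∈ s) (hy : y ∈ s) (ht : 0 ≤ t) (hxy : t ≤ x - y) :
    f (x - t) + f (y + t) ≤ f x + f y := by
  rcases (ht.trans hxy).eq_or_lt' with hd | hd
  · obtain rfl : t = 0 := le_antisymm (hxy.trans_eq hd) ht
    simp
  · obtain ⟨w, rfl⟩ : ∃ w, t = w * (x - y) := ⟨t / (x - y), by field_simp⟩
    have hw₀ : 0 ≤ w := nonneg_of_mul_nonneg_left ht hd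
    have hw₁ : 0 ≤ 1 - w := sub_nonneg.2 (le_of_mul_le_mul_right (by simpa using hxy) hd)
    calc f (x - w * (x - y)) + f (y + w * (x - y))
        = f ((1 - w) • x + w • y) + f (w • x + (1 - w) • y) := by
          simp only [smul_eq_mul]; congr 2 <;> ring
      _ ≤ ((1 - w) • f x + w • f y) + (w • f x + (1 - w) • f y) :=
          add_le_add (hf.2 hx hy hw₁ hw₀ (by ring)) (hf.2 hx hy hw₀ hw₁ (by ring))
      _ = f x + f y := by simp only [smul_eq_mul]; ring

variable {f : ℝ → ℝ}

theorem isSymmetricBall_setOf_add_le (hf : ConvexOn ℝ (Set.Ici 0) f)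
    (hmono : MonotoneOn f (Set.Ici 0)) (s : ℝ) :
    IsSymmetricBall {z : ℤ × ℤ | f |(z.1 : ℝ)| + f |(z.2 : ℝ)| ≤ s} where
  swap h := by simpa [add_comm] using h
  mono {x y x' y'} h hx hy := by
    have map_abs_le {m n : ℤ} (hmn : m.natAbs ≤ n.natAbs) : f |(m : ℝ)| ≤ f |(n : ℝ)| :=
      hmono (Set.mem_Ici.2 (abs_nonneg _)) (Set.mem_Ici.2 (abs_nonneg _)) <| by
        exact_mod_cast sq_le_sq.1 (Int.natAbs_le_iff_sq_le.1 hmn)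
    exact (add_le_add (map_abs_le hx) (map_abs_le hy)).trans h
  transfer {x y} h hy hxy := by
    have hy' : (0 : ℝ) ≤ y := by exact_mod_cast hy
    have hxy' : (y : ℝ) + 1 ≤ x := by exact_mod_cast hxy
    have hx' : (0 : ℝ) ≤ x := by linarith
    simp only [Set.mem_ofPred_eq, abs_of_nonneg hx', abs_of_nonneg hy'] at h
    simp only [Set.mem_ofPred_eq, Int.cast_sub, Int.cast_add, Int.cast_one]
    rw [abs_of_nonneg (by linarith), abs_of_nonneg (by linarith)]
    exact (map_sub_add_map_add_le_of_convexOn hf hx' hy' one_pos.le (by linarith)).trans h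

theorem isPointedBall_setOf_add_le (hf : ConvexOn ℝ (Set.Ici 0) f)
    (hmono : MonotoneOn f (Set.Ici 0)) {r : ℕ} (hr : 0 < r) {s : ℝ} (htip : f r + f 0 ≤ s)
    (hbeside : s < f r + f 1) (hnext : f (r - 1) + f 2 ≤ s) :
    IsPointedBall r {z : ℤ × ℤ | f |(z.1 : ℝ)| + f |(z.2 : ℝ)| ≤ s} where
  toIsSymmetricBall := isSymmetricBall_setOf_add_le hf hmono s
  tip := by simpa using htip
  beside_tip := by simpa using hbeside
  next_column := by
    have hr' : (0 : ℝ) ≤ r - 1 := sub_nonneg.2 (by exact_mod_cast hr)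
    simpa [abs_of_nonneg hr'] using hnext

end Convex

/-- The powers `t ^ p` are replaced by an arbitrary profile `f`, and the power of the radius by an
arbitrary threshold `s`; in particular the radius of the ball need not be an integer. -/
theorem no_tiling_Z2_general {f : ℝ → ℝ} (hf : ConvexOn ℝ (Set.Ici 0) f)
    (hmono : MonotoneOn f (Set.Ici 0)) {r : ℕ} (hr : 0 < r) {s : ℝ} (htip : f r + f 0 ≤ s)
    (hbeside : s < f r + f 1) (hnext : f (r - 1) + f 2 ≤ s) :
    ¬ ∃ C : Set (ℤ × ℤ), ∀ z : ℤ × ℤ, ∃! c, c ∈ C ∧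
        f |(z.1 - c.1 : ℝ)| + f |(z.2 - c.2 : ℝ)| ≤ s := by
  rintro ⟨C, hC⟩
  refine (isPointedBall_setOf_add_le hf hmono hr htip hbeside hnext).not_isComplement (C := C) ?_
  simpa [isComplement_iff_existsUnique_sub_mem] using hC

/-- For an integer `r ≥ 3` and a real `1 < p < ∞` with `(r−1)^p + 2^p ≤ r^p`, there is no
tiling of `ℤ²` (equivalently of `ℝ²` by the polyomino `T_p²(r)`) by translates of the
`ℓ_p` ball `B_p²(r)`. -/
theorem no_tiling_Z2 (r : ℕ) (hr : 3 ≤ r) (p : ℝ) (hp : 1 < p)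
    (h : ((r : ℝ) - 1) ^ p + 2 ^ p ≤ (r : ℝ) ^ p) :
    ¬ ∃ C : Set (ℤ × ℤ), ∀ z : ℤ × ℤ, ∃! c, c ∈ C ∧
        (|z.1 - c.1| : ℝ) ^ p + (|z.2 - c.2| : ℝ) ^ p ≤ (r : ℝ) ^ p :=
  no_tiling_Z2_general (convexOn_rpow hp.le)
    (Real.monotoneOn_rpow_Ici_of_exponent_nonneg (by linarith)) (by omega)
    (by simp [Real.zero_rpow (by linarith : p ≠ 0)]) (by simp) h
end

section
/- Let n ≥ 3 and r ≥ 3 be integers and p a real number with 1 < p < ∞ such that (n−1)·(r−1)^p + (r−2)^p ≤ r^p. Then there is no set C ⊆ ℤ^n such that the translates c + B_p^n(r), c ∈ C, partition ℤ^n (equivalently, the polyomino T_p^n(r), the union of unit cubes centered at the points of B_p^n(r), does not tile ℝ^n). -/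
open Finset

/-!
Put `m = r - 1`. The hypothesis on `p` says that `B = B_p(r)` is the cube `[-m, m]^n` with its
corners all kept or all deleted, together with the `2n` bumps `± (m + 1) e_i`. Two disjoint
translates of such a set overlap as cubes in at most two adjacent points, each a deleted corner of
one of the cubes. Place one translate at the origin. Consider a point `y ≠ (m + 1) e₀` within sup
distance `1` of the bump `(m + 1) e₀` and in the hyperplane `y₀ = m + 1`. A translate `d + B`
covering it must have its bottom facet `d₀ - m` in that hyperplane. Hence in one dimension less one
sees disjoint cubes covering a neighbourhood of the bump. None of them contains the bump itself:
otherwise the bump would fill a deleted corner of that cube, and a parity count shows that a second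
cube has a corner in the neighbourhood, a deleted point that nothing covers. So the cubes surround
the bump closely enough to leave no room for a translate covering the point `(m + 2) e₀` right
above it.
-/

section Tiling

variable {G : Type*} [AddGroup G] {B C : Set G}

/-- The translates `c + B` with `c ∈ C` are pairwise disjoint; `x ∈ c + B` is spelled
`x - c ∈ B`. -/
def IsPacking (B C : Set G) : Prop :=
  ∀ ⦃z c c' : G⦄, c ∈ C → c' ∈ C → z - c ∈ B → z - c' ∈ B → c = c'

/-- The translates `c + B` with `c ∈ C` partition `G`. -/
def IsTiling (B C : Set G) : Prop :=
  ∀ z : G, ∃! c, c ∈ C ∧ z - c ∈ B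

lemma IsTiling.isPacking (hC : IsTiling B C) : IsPacking B C :=
  fun z _ _ hc hc' hzc hzc' => (hC z).unique ⟨hc, hzc⟩ ⟨hc', hzc'⟩

lemma IsTiling.exists_mem (hC : IsTiling B C) (z : G) : ∃ c ∈ C, z - c ∈ B :=
  (hC z).exists

lemma IsTiling.preimage_add_right (hC : IsTiling B C) (g : G) :
    IsTiling B ((· + g) ⁻¹' C) := by
  intro z
  obtain ⟨c, ⟨hc, hzc⟩, huniq⟩ := hC (z + g)
  refine ⟨c - g, ⟨by simpa using hc, by simpa [sub_eq_add_neg, add_assoc] using hzc⟩, ?_⟩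
  rintro c' ⟨hc', hzc'⟩
  exact eq_sub_of_add_eq (huniq _ ⟨hc', by simpa [sub_eq_add_neg, add_assoc] using hzc'⟩)

end Tiling

section Parity

variable {κ : Type*}

lemma even_card_of_update_neg_mem [DecidableEq κ] {s : Finset (κ → ℤˣ)} (j : κ)
    (hs : ∀ u ∈ s, Function.update u j (-u j) ∈ s) : Even #s := by
  have hsum : ∑ _u ∈ s, (1 : ZMod 2) = 0 :=
    sum_involution (fun u _ => Function.update u j (-u j)) (fun _ _ => by decide)
      (fun u _ _ h => (by decide : ∀ s : ℤˣ, -s ≠ s) (u j) (by simpa using congrFun h j)) hs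
      (fun _ _ => by simp)
  simpa [ZMod.natCast_eq_zero_iff_even] using hsum

lemma exists_ne_map_eq_of_update_neg [Finite κ] [Nonempty κ] [DecidableEq κ] {α : Type*}
    (f : (κ → ℤˣ) → α) (u₀ : κ → ℤˣ)
    (hf : ∀ u, f u ≠ f u₀ → ∃ j, ∀ v, f v = f u → f (Function.update v j (-v j)) = f u) :
    ∃ u, u ≠ u₀ ∧ f u = f u₀ := by
  classical
  have := Fintype.ofFinite κ
  have even_fiber : ∀ a ∈ (univ.image f).erase (f u₀), Even #{u | f u = a} := by
    intro a ha
    obtain ⟨ha₀, u, -, rfl⟩ := by simpa only [mem_erase, mem_image] using ha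
    obtain ⟨j, hj⟩ := hf u ha₀
    exact even_card_of_update_neg_mem j (by simpa using hj)
  have even_univ : Even #(univ : Finset (κ → ℤˣ)) :=
    even_card_of_update_neg_mem (Classical.arbitrary κ) (by simp)
  rw [card_eq_sum_card_image f, ← add_sum_erase _ _ (mem_image_of_mem f (mem_univ u₀)),
    Nat.even_add, iff_true_right (even_sum _ even_fiber)] at even_univ
  have one_lt : 1 < #{u | f u = f u₀} := by
    have : 0 < #{u | f u = f u₀} := card_pos.2 ⟨u₀, by simp⟩
    grind
  obtain ⟨u, hu, hne⟩ := exists_mem_ne one_lt u₀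
  exact ⟨u, hne, by simpa using hu⟩

/-- If no other cube had a corner near `0`, then every cube other than the one at `c` would contain
an even number of the sign vectors, whereas the cube at `c` contains exactly one. -/
lemma exists_corner_ne_of_cubes_cover_signs [Finite κ] [Nonempty κ] {m : ℤ} (hm : 0 < m)
    {E : Set (κ → ℤ)}
    (disjoint : ∀ d ∈ E, ∀ d' ∈ E, (∀ k, |d k - d' k| ≤ 2 * m) → d = d')
    (cover : ∀ u : κ → ℤˣ, ∃ d ∈ E, ∀ k, |(u k : ℤ) - d k| ≤ m)
    {c : κ → ℤ} (hc : c ∈ E) (hcm : ∀ k, |c k| = m) :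
    ∃ d ∈ E, d ≠ c ∧ ∀ k, |d k| = m ∨ |d k| = m + 1 := by
  classical
  by_contra! no_corner
  choose D hDE hD using cover
  have unique : ∀ u, ∀ d ∈ E, (∀ k, |(u k : ℤ) - d k| ≤ m) → D u = d := fun u d hd hud =>
    disjoint _ (hDE u) d hd fun k => by have := hD u k; have := hud k; grind
  have exists_sign : ∀ k, ∃ s : ℤˣ, c k = s * m := fun k =>
    (eq_or_eq_neg_of_abs_eq (hcm k)).elim (fun h => ⟨1, by simpa using h⟩)
      (fun h => ⟨-1, by simpa using h⟩)
  choose u₀ hu₀ using exists_sign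
  have abs_sub_le_iff : ∀ (s : ℤˣ) k, |(s : ℤ) - c k| ≤ m ↔ s = u₀ k := fun s k => by
    rw [hu₀ k, abs_le, Units.ext_iff]
    obtain h | h := Int.units_eq_one_or s <;> obtain h' | h' := Int.units_eq_one_or (u₀ k) <;>
      simp only [h, h', Units.val_one, Units.val_neg] <;> grind
  have hDu₀ : D u₀ = c := unique u₀ c hc fun k => (abs_sub_le_iff _ k).2 rfl
  obtain ⟨u, hne, hu⟩ := exists_ne_map_eq_of_update_neg D u₀ fun u hu => by
    obtain ⟨j, hj⟩ := no_corner (D u) (hDE u) (hDu₀ ▸ hu)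
    refine ⟨j, fun v hv => unique _ _ (hDE u) fun k => ?_⟩
    have huj := hD u j
    have hvk := hv ▸ hD v k
    obtain rfl | hkj := eq_or_ne k j
    · obtain h | h := Int.units_eq_one_or (u k) <;> obtain h' | h' := Int.units_eq_one_or (v k) <;>
        simp only [h, h', Function.update_self, Units.val_neg, Units.val_one] at * <;> grind
    · simpa [hkj] using hvk
  exact hne (funext fun k => (abs_sub_le_iff _ k).1 (hDu₀ ▸ hu ▸ hD u k))

end Parity

lemma exists_add_eq_of_abs_le_two_mul {a m : ℤ} (h : |a| ≤ 2 * m) :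
    ∃ x y, x + y = a ∧ |x| ≤ m ∧ |y| ≤ m ∧
      (|a| < 2 * m → |x| < m) ∧ (|a| ≤ 2 * m - 2 → |y| < m) := by
  obtain ha | ha := le_total 0 a
  · refine ⟨a / 2, a - a / 2, by omega, ?_⟩
    simp only [abs_le, abs_lt] at *
    omega
  · refine ⟨-(-a / 2), a + -a / 2, by omega, ?_⟩
    simp only [abs_le, abs_lt] at *
    omega

/-- `B` is the cube `[-m, m]^ι`, whose corners (the points with all coordinates `± m`) are either
all present or all deleted, with the bumps `± (m + 1) e_i` added. This is the shape of the `ℓ_p`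
ball of radius `m + 1` in the theorem. -/
structure IsBumpyCube {ι : Type*} (m : ℤ) (B : Set (ι → ℤ)) : Prop where
  mem_of_abs_lt : ∀ x : ι → ℤ, (∀ i, |x i| ≤ m) → ∀ j, |x j| < m → x ∈ B
  mem_of_bump : ∀ (x : ι → ℤ) (i : ι), |x i| = m + 1 → (∀ j, j ≠ i → x j = 0) → x ∈ B
  cube_or_bump : ∀ x ∈ B, (∀ i, |x i| ≤ m) ∨ ∃ i, |x i| = m + 1 ∧ ∀ j, j ≠ i → x j = 0
  corner_mem : ∀ x ∈ B, (∀ i, |x i| = m) → ∀ y : ι → ℤ, (∀ i, |y i| = m) → y ∈ B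

namespace IsBumpyCube

variable {ι : Type*} {m : ℤ} {B C : Set (ι → ℤ)} {c c' d z y : ι → ℤ} {i₀ j k : ι}

lemma notMem_of_lt_of_ne_zero (hB : IsBumpyCube m B) (hm : 0 ≤ m) (hz : m < z j) (hk : k ≠ j)
    (hzk : z k ≠ 0) : z ∉ B := by
  intro hzB
  obtain h | ⟨i, -, h⟩ := hB.cube_or_bump z hzB
  · have := h j
    grind
  · grind

lemma notMem_of_add_one_lt (hB : IsBumpyCube m B) (hm : 0 ≤ m) (hz : m + 1 < z j) : z ∉ B := by
  intro hzB
  obtain h | ⟨i, hi, h⟩ := hB.cube_or_bump z hzB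
  · have := h j
    grind
  · obtain rfl | hij := eq_or_ne j i
    · grind
    · have := h j hij
      omega

lemma eq_of_forall_exists_add_eq (hB : IsBumpyCube m B) (hC : IsPacking B C) (hc : c ∈ C)
    (hc' : c' ∈ C) (j k : ι)
    (h : ∀ i, ∃ x y, x + y = c i - c' i ∧ |x| ≤ m ∧ |y| ≤ m ∧
      (i = j → |x| < m) ∧ (i = k → |y| < m)) : c = c' := by
  choose x y hxy hx hy hxj hyk using h
  have hxc : c' + y - c = -x := by
    funext i
    have := hxy i
    simp only [Pi.sub_apply, Pi.add_apply, Pi.neg_apply]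
    omega
  refine hC hc hc' (z := c' + y) (hxc ▸ hB.mem_of_abs_lt _ ?_ j ?_) ?_
  · simpa using hx
  · simpa using hxj j rfl
  · simpa using hB.mem_of_abs_lt y hy k (hyk k rfl)

lemma eq_of_abs_sub_le_two_mul_sub_two (hB : IsBumpyCube m B) (hC : IsPacking B C) (hc : c ∈ C)
    (hc' : c' ∈ C) (j : ι) (hj : |c j - c' j| ≤ 2 * m - 2)
    (h : ∀ i, i ≠ j → |c i - c' i| ≤ 2 * m) : c = c' := by
  refine hB.eq_of_forall_exists_add_eq hC hc hc' j j fun i => ?_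
  have hi : |c i - c' i| ≤ 2 * m := by
    obtain rfl | hij := eq_or_ne i j
    · omega
    · exact h i hij
  obtain ⟨x, y, hxy, hx, hy, hx', hy'⟩ := exists_add_eq_of_abs_le_two_mul hi
  exact ⟨x, y, hxy, hx, hy, fun hij => hx' (by subst hij; omega), fun hij => hy' (hij ▸ hj)⟩

lemma eq_of_abs_sub_lt_two_mul (hB : IsBumpyCube m B) (hC : IsPacking B C) (hc : c ∈ C)
    (hc' : c' ∈ C) (hjk : j ≠ k) (hj : |c j - c' j| < 2 * m) (hk : |c k - c' k| < 2 * m)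
    (h : ∀ i, |c i - c' i| ≤ 2 * m) : c = c' := by
  refine hB.eq_of_forall_exists_add_eq hC hc hc' j k fun i => ?_
  obtain ⟨x, y, hxy, hx, hy, hx', -⟩ := exists_add_eq_of_abs_le_two_mul (h i)
  obtain rfl | hij := eq_or_ne i j
  · exact ⟨x, y, hxy, hx, hy, fun _ => hx' hj, fun hik => absurd hik hjk⟩
  · exact ⟨y, x, by omega, hy, hx, fun h => absurd h hij, fun hik => hx' (hik ▸ hk)⟩

lemma two_mul_lt_of_cube_near_bump (hB : IsBumpyCube m B) (hm : 2 ≤ m) (hι : 3 ≤ ENat.card ι)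
    (hC : IsPacking B C) (h0 : 0 ∈ C) (hd : d ∈ C) (hd0 : d ≠ 0) (hz₀ : 0 ≤ z i₀)
    (hz : ∀ k, k ≠ i₀ → |z k| ≤ 1) (hzd : ∀ i, |z i - d i| ≤ m) : 2 * m < d i₀ := by
  by_contra! hle
  obtain ⟨j, hj, -⟩ := ENat.exists_ne_ne_of_three_le hι i₀ i₀
  obtain ⟨k, hk, hkj⟩ := ENat.exists_ne_ne_of_three_le hι i₀ j
  have abs_apply_le : ∀ i, i ≠ i₀ → |d i| ≤ m + 1 := fun i hi => by
    have := hzd i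
    have := hz i hi
    grind
  have abs_apply_i₀_le : |d i₀| ≤ 2 * m := by
    have := hzd i₀
    grind
  refine hd0 (hB.eq_of_abs_sub_lt_two_mul hC hd h0 hkj.symm ?_ ?_ fun i => ?_) <;>
    simp only [Pi.zero_apply, sub_zero]
  · exact (abs_apply_le j hj).trans_lt (by omega)
  · exact (abs_apply_le k hk).trans_lt (by omega)
  · obtain rfl | hi := eq_or_ne i i₀
    · exact abs_apply_i₀_le
    · exact (abs_apply_le i hi).trans (by omega)

lemma eq_of_bump_near_bump (hB : IsBumpyCube m B) (hm : 2 ≤ m) (hι : 3 ≤ ENat.card ι)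
    (hC : IsPacking B C) (h0 : 0 ∈ C) (hd : d ∈ C) (hd0 : d ≠ 0) (hz₀ : |z i₀| ≤ m + 2)
    (hz : ∀ k, k ≠ i₀ → |z k| ≤ 1) {i : ι} (hi : |z i - d i| = m + 1)
    (h : ∀ k, k ≠ i → z k - d k = 0) : i = i₀ := by
  by_contra hii₀
  obtain ⟨k, hk, hki⟩ := ENat.exists_ne_ne_of_three_le hι i₀ i
  refine hd0 (hB.eq_of_abs_sub_le_two_mul_sub_two hC hd h0 k ?_ fun l _ => ?_) <;>
    simp only [Pi.zero_apply, sub_zero]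
  · have := h k hki
    have := hz k hk
    grind
  · obtain rfl | hli := eq_or_ne l i
    · have := hz l hii₀
      grind
    have := h l hli
    obtain rfl | hli₀ := eq_or_ne l i₀
    · grind
    · have := hz l hli₀
      grind

lemma cube_or_facing_bump (hB : IsBumpyCube m B) (hm : 2 ≤ m) (hι : 3 ≤ ENat.card ι)
    (hC : IsPacking B C) (h0 : 0 ∈ C) (hz₀ : z i₀ = m + 1 ∨ z i₀ = m + 2)
    (hz : ∀ k, k ≠ i₀ → |z k| ≤ 1) (hzB : z ∉ B) (hd : d ∈ C) (hzd : z - d ∈ B) :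
    2 * m < d i₀ ∧
      ((∀ i, |z i - d i| ≤ m) ∨ d i₀ = z i₀ + (m + 1) ∧ ∀ k, k ≠ i₀ → d k = z k) := by
  have hd0 : d ≠ 0 := by
    rintro rfl
    exact hzB (by simpa using hzd)
  obtain h | ⟨i, hi, h⟩ := hB.cube_or_bump _ hzd <;> simp only [Pi.sub_apply] at h
  · exact ⟨hB.two_mul_lt_of_cube_near_bump hm hι hC h0 hd hd0 (by omega) hz h, .inl h⟩
  simp only [Pi.sub_apply] at hi
  obtain rfl := hB.eq_of_bump_near_bump hm hι hC h0 hd hd0 (by grind) hz hi h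
  have hdk : ∀ k, k ≠ i → d k = z k := fun k hk => (sub_eq_zero.1 (h k hk)).symm
  have not_small : ¬ |d i| ≤ 1 := fun hdi => hd0 <|
    hB.eq_of_abs_sub_le_two_mul_sub_two hC hd h0 i
      (by simpa only [Pi.zero_apply, sub_zero] using hdi.trans (by omega)) fun k hk => by
        simpa only [Pi.zero_apply, sub_zero, hdk k hk] using (hz k hk).trans (by omega)
  grind

lemma exists_cube_of_bump_neighbor (hB : IsBumpyCube m B) (hm : 2 ≤ m) (hι : 3 ≤ ENat.card ι)
    (hC : IsTiling B C) (h0 : 0 ∈ C) (hy₀ : y i₀ = m + 1) (hy : ∀ k, k ≠ i₀ → |y k| ≤ 1)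
    (hj : j ≠ i₀) (hyj : y j ≠ 0) :
    ∃ d ∈ C, d i₀ = 2 * m + 1 ∧ y - d ∈ B ∧ ∀ k, k ≠ i₀ → |y k - d k| ≤ m := by
  classical
  have cover : ∀ y : ι → ℤ, y i₀ = m + 1 → (∀ k, k ≠ i₀ → |y k| ≤ 1) → y j ≠ 0 →
      ∃ d ∈ C, y - d ∈ B ∧ (d i₀ = 2 * m + 1 ∧ (∀ k, k ≠ i₀ → |y k - d k| ≤ m) ∨
        d i₀ = 2 * m + 2 ∧ ∀ k, k ≠ i₀ → d k = y k) := fun y hy₀ hy hyj => by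
    obtain ⟨d, hd, hyd⟩ := hC.exists_mem y
    have hyB := hB.notMem_of_lt_of_ne_zero (by omega) (by omega : m < y i₀) hj hyj
    obtain ⟨hle, h | h⟩ := hB.cube_or_facing_bump hm hι hC.isPacking h0 (.inl hy₀) hy hyB hd hyd
    · have := h i₀
      exact ⟨d, hd, hyd, .inl ⟨by grind, fun k _ => h k⟩⟩
    · exact ⟨d, hd, hyd, .inr ⟨by omega, h.2⟩⟩
  obtain ⟨d, hd, hyd, h | ⟨hd₀, h⟩⟩ := cover y hy₀ hy hyj
  · exact ⟨d, hd, h.1, hyd, h.2⟩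
  -- A facing bump at `y` leaves no translate for the reflection of `y` in the axis of the bump.
  exfalso
  obtain ⟨d', hd', -, h'⟩ := cover (fun k => if k = i₀ then y k else -y k) (by simp [hy₀])
    (fun k hk => by simpa [hk] using hy k hk) (by simpa [hj] using hyj)
  obtain rfl : d = d' :=
    hB.eq_of_abs_sub_le_two_mul_sub_two hC.isPacking hd hd' i₀ (by grind) fun k hk => by
      have := hy k hk
      have := h k hk
      grind
  grind

lemma exists_corner_mem_of_cube_near_bump (hB : IsBumpyCube m B) (hm : 2 ≤ m)
    (hι : 3 ≤ ENat.card ι) (hC : IsTiling B C) (h0 : 0 ∈ C) (hd : d ∈ C) (hd₀ : d i₀ = 2 * m + 1)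
    (hdm : ∀ k, k ≠ i₀ → |d k| = m ∨ |d k| = m + 1) (hk : k ≠ i₀) (hdk : |d k| ≠ m) :
    ∃ x ∈ B, ∀ i, |x i| = m := by
  -- `y` is the corner of `d + [-m, m]^ι` closest to the bump.
  have exists_coord : ∀ k, ∃ a, |a - d k| = m ∧ (k = i₀ → a = m + 1) ∧
      (k ≠ i₀ → |a| ≤ 1 ∧ (|d k| ≠ m → a ≠ 0)) := fun k => by
    obtain rfl | hk := eq_or_ne k i₀
    · exact ⟨m + 1, by grind, by simp, by simp⟩
    have := hdm k hk
    obtain h | h := le_total 0 (d k)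
    · exact ⟨d k - m, by grind, by grind, by grind⟩
    · exact ⟨d k + m, by grind, by grind, by grind⟩
  choose y abs_sub hy₀ hy using exists_coord
  obtain ⟨d', hd', h₀', hB', h'⟩ := hB.exists_cube_of_bump_neighbor hm hι hC h0 (hy₀ i₀ rfl)
    (fun k hk => (hy k hk).1) hk ((hy k hk).2 hdk)
  obtain rfl : d = d' :=
    hB.eq_of_abs_sub_le_two_mul_sub_two hC.isPacking hd hd' i₀ (by grind) fun k hk => by
      have := abs_sub k
      have := h' k hk
      grind
  exact ⟨_, hB', abs_sub⟩

lemma exists_abs_ne_of_missing_corners [Finite ι] (hB : IsBumpyCube m B) (hm : 2 ≤ m)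
    (hι : 3 ≤ ENat.card ι) (hC : IsTiling B C) (h0 : 0 ∈ C)
    (missing : ∀ x ∈ B, ∃ i, |x i| ≠ m) (hc : c ∈ C) (hc₀ : c i₀ = 2 * m + 1) :
    ∃ k, k ≠ i₀ ∧ |c k| ≠ m := by
  classical
  by_contra! hcm
  have unique : ∀ d ∈ C, ∀ d' ∈ C, d i₀ = 2 * m + 1 → d' i₀ = 2 * m + 1 →
      (∀ k, k ≠ i₀ → |d k - d' k| ≤ 2 * m) → d = d' := fun d hd d' hd' h₀ h₀' =>
    hB.eq_of_abs_sub_le_two_mul_sub_two hC.isPacking hd hd' i₀ (by grind)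
  obtain ⟨j, hj, -⟩ := ENat.exists_ne_ne_of_three_le hι i₀ i₀
  have : Nonempty {k // k ≠ i₀} := ⟨⟨j, hj⟩⟩
  let restrict : (ι → ℤ) → {k // k ≠ i₀} → ℤ := fun d k => d k
  obtain ⟨-, ⟨d, ⟨hd, hd₀⟩, rfl⟩, hdc, hdm⟩ := exists_corner_ne_of_cubes_cover_signs
    (m := m) (E := restrict '' {d ∈ C | d i₀ = 2 * m + 1}) (c := restrict c) (by omega)
    (by
      rintro _ ⟨d, ⟨hd, h₀⟩, rfl⟩ _ ⟨d', ⟨hd', h₀'⟩, rfl⟩ h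
      rw [unique d hd d' hd' h₀ h₀' fun k hk => h ⟨k, hk⟩])
    (fun u => by
      obtain ⟨d, hd, h₀, -, h⟩ := hB.exists_cube_of_bump_neighbor hm hι hC h0 (i₀ := i₀)
        (y := fun k => if hk : k = i₀ then m + 1 else u ⟨k, hk⟩) (by simp)
        (fun k hk => by simp [hk, Int.isUnit_iff_abs_eq.1 (u _).isUnit]) hj (by simp [hj])
      exact ⟨_, ⟨d, ⟨hd, h₀⟩, rfl⟩, fun k => by simpa [k.2] using h k k.2⟩)
    ⟨c, ⟨hc, hc₀⟩, rfl⟩ (fun k => hcm k k.2)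
  obtain ⟨k, hk, hdk⟩ : ∃ k, k ≠ i₀ ∧ |d k| ≠ m := by
    by_contra! h
    refine hdc (congrArg restrict (unique d hd c hc hd₀ hc₀ fun k hk => ?_))
    have := h k hk
    have := hcm k hk
    grind
  obtain ⟨x, hx, hxm⟩ := hB.exists_corner_mem_of_cube_near_bump hm hι hC h0 hd hd₀
    (fun k hk => hdm ⟨k, hk⟩) hk hdk
  obtain ⟨i, hi⟩ := missing x hx
  exact hi (hxm i)

lemma exists_cube_beside_bump [Finite ι] (hB : IsBumpyCube m B) (hm : 2 ≤ m)
    (hι : 3 ≤ ENat.card ι) (hC : IsTiling B C) (h0 : 0 ∈ C) (hj : j ≠ i₀) (s : ℤˣ) :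
    ∃ d ∈ C, d i₀ = 2 * m + 1 ∧ d j = s * (m + 1) ∧ ∀ k, k ≠ i₀ → k ≠ j → |d k| ≤ m := by
  classical
  obtain ⟨d, hd, hd₀, -, hyd⟩ := hB.exists_cube_of_bump_neighbor hm hι hC h0
    (y := Pi.single i₀ (m + 1) + Pi.single j (s : ℤ)) (i₀ := i₀) (j := j) (by simp [hj.symm])
    (fun k hk => by
      obtain rfl | hkj := eq_or_ne k j <;> simp [*, Int.isUnit_iff_abs_eq.1 s.isUnit])
    hj (by simp [hj])
  have hdk : ∀ k, k ≠ i₀ → k ≠ j → |d k| ≤ m := fun k hk hkj => by simpa [*] using hyd k hk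
  have hdj : |(s : ℤ) - d j| ≤ m := by simpa [hj] using hyd j hj
  refine ⟨d, hd, hd₀, ?_, hdk⟩
  by_contra hne
  let tip : ι → ℤ := Pi.single i₀ (m + 1)
  have tip_notMem : tip - d ∉ B := fun h => by
    have htip : tip - 0 ∈ B :=
      hB.mem_of_bump _ i₀ (by simp [tip, abs_of_nonneg (by omega : 0 ≤ m + 1)])
        (by simp +contextual [tip])
    obtain rfl := hC.isPacking hd h0 h htip
    simp only [Pi.zero_apply] at hd₀
    omega
  have abs_tip_sub : ∀ k, |(tip - d) k| = m := fun k => by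
    have abs_tip_sub_le : ∀ k, |(tip - d) k| ≤ m := fun k => by
      have := hdk k
      obtain h | h := Int.units_eq_one_or s <;>
        simp only [h, Units.val_one, Units.val_neg] at * <;>
        simp only [tip, Pi.sub_apply, Pi.single_apply] <;> grind
    exact (abs_tip_sub_le k).eq_of_not_lt fun hlt =>
      tip_notMem (hB.mem_of_abs_lt _ abs_tip_sub_le k hlt)
  obtain ⟨k, hk, hdk⟩ := hB.exists_abs_ne_of_missing_corners hm hι hC h0
    (fun x hx => by
      by_contra! hxm
      exact tip_notMem (hB.corner_mem x hx hxm _ abs_tip_sub)) hd hd₀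
  exact hdk (by simpa [tip, hk] using abs_tip_sub k)

lemma exists_mem_above_bump (hB : IsBumpyCube m B) (hm : 2 ≤ m) (hι : 3 ≤ ENat.card ι)
    (hC : IsTiling B C) (h0 : 0 ∈ C) (i₀ : ι) :
    ∃ d ∈ C, 2 * m < d i₀ ∧ d i₀ ≤ 2 * m + 3 ∧ ∀ k, k ≠ i₀ → |d k| ≤ m := by
  classical
  let z : ι → ℤ := Pi.single i₀ (m + 2)
  have hz₀ : z i₀ = m + 2 := by simp [z]
  have hz : ∀ k, k ≠ i₀ → z k = 0 := by simp +contextual [z]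
  obtain ⟨d, hd, hzd⟩ := hC.exists_mem z
  obtain ⟨hle, h⟩ := hB.cube_or_facing_bump hm hι hC.isPacking h0 (.inr hz₀)
    (fun k hk => by simp [hz k hk]) (hB.notMem_of_add_one_lt (j := i₀) (by omega) (by omega)) hd hzd
  refine ⟨d, hd, hle, ?_, fun k hk => ?_⟩
  · grind
  · have := hz k hk
    grind

theorem not_isTiling [Finite ι] (hB : IsBumpyCube m B) (hm : 2 ≤ m) (hι : 3 ≤ ENat.card ι) :
    ¬ IsTiling B C := by
  intro hC
  obtain ⟨c₀, hc₀, -⟩ := hC.exists_mem 0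
  replace hC := hC.preimage_add_right c₀
  have h0 : 0 ∈ (· + c₀) ⁻¹' C := by simpa using hc₀
  have : Nontrivial ι := (ENat.one_lt_card_iff_nontrivial ι).1 (lt_of_lt_of_le (by norm_num) hι)
  obtain ⟨j, i₀, hj⟩ := exists_pair_ne ι
  obtain ⟨d, hd, hle, hge, hdk⟩ := hB.exists_mem_above_bump hm hι hC h0 i₀
  obtain ⟨s, hs⟩ : ∃ s : ℤˣ, |d j - s * (m + 1)| ≤ m + 1 := by
    have := hdk j hj
    obtain h | h := le_total 0 (d j)
    · exact ⟨1, by simp only [Units.val_one]; grind⟩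
    · exact ⟨-1, by simp only [Units.val_neg, Units.val_one]; grind⟩
  obtain ⟨e, he, he₀, hej, hek⟩ := hB.exists_cube_beside_bump hm hι hC h0 hj s
  have hde : d = e :=
    hB.eq_of_abs_sub_le_two_mul_sub_two hC.isPacking hd he i₀ (by grind) fun k hk => by
      obtain rfl | hkj := eq_or_ne k j
      · rw [hej]
        omega
      · have := hdk k hk
        have := hek k hk hkj
        grind
  have habs : |e j| = m + 1 := by
    rw [hej, abs_mul, Int.isUnit_iff_abs_eq.1 s.isUnit, one_mul, abs_of_nonneg (by omega)]
  have := hdk j hj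
  rw [hde] at this
  omega

end IsBumpyCube

section LpBall

variable {ι : Type*} [Fintype ι] {p : ℝ} {r : ℤ} {x : ι → ℤ}

/-- The set of integer points of the `ℓ_p` ball of radius `r` about `0`, as the sublevel set of
`∑ |x i| ^ p`, without the outer `p`-th root. -/
def lpBall (ι : Type*) [Fintype ι] (p r : ℝ) : Set (ι → ℤ) :=
  {x | ∑ i, |(x i : ℝ)| ^ p ≤ r ^ p}

lemma mem_lpBall_of_abs_lt (hp : 0 ≤ p)
    (h : ((Fintype.card ι : ℝ) - 1) * ((r : ℝ) - 1) ^ p + ((r : ℝ) - 2) ^ p ≤ (r : ℝ) ^ p)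
    (hx : ∀ i, |x i| ≤ r - 1) (j : ι) (hj : |x j| < r - 1) : x ∈ lpBall ι p r := by
  classical
  have hj' : |(x j : ℝ)| ≤ r - 2 := by exact_mod_cast (by omega : |x j| ≤ r - 2)
  calc ∑ i, |(x i : ℝ)| ^ p
      = ∑ i ∈ univ.erase j, |(x i : ℝ)| ^ p + |(x j : ℝ)| ^ p :=
        (sum_erase_add _ _ (mem_univ j)).symm
    _ ≤ #(univ.erase j) • ((r : ℝ) - 1) ^ p + ((r : ℝ) - 2) ^ p := by
        gcongr
        refine sum_le_card_nsmul _ _ _ fun i _ => ?_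
        gcongr
        exact_mod_cast hx i
    _ = ((Fintype.card ι : ℝ) - 1) * ((r : ℝ) - 1) ^ p + ((r : ℝ) - 2) ^ p := by
        rw [nsmul_eq_mul, cast_card_erase_of_mem (mem_univ j), card_univ]
    _ ≤ (r : ℝ) ^ p := h

lemma mem_lpBall_of_bump (hp : p ≠ 0) {i : ι} (hi : |x i| = r) (h : ∀ j, j ≠ i → x j = 0) :
    x ∈ lpBall ι p r := by
  have hi' : |(x i : ℝ)| = r := by exact_mod_cast hi
  refine (?_ : ∑ i, |(x i : ℝ)| ^ p = (r : ℝ) ^ p).le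
  rw [sum_eq_single i (fun j _ hj => by simp [h j hj, Real.zero_rpow hp]) (by simp), hi']

lemma abs_le_or_bump_of_mem_lpBall (hp : 0 < p) (hr : 0 ≤ r) (hx : x ∈ lpBall ι p r) :
    (∀ i, |x i| ≤ r - 1) ∨ ∃ i, |x i| = r ∧ ∀ j, j ≠ i → x j = 0 := by
  classical
  by_contra! hne
  obtain ⟨⟨i, hi⟩, hbump⟩ := hne
  have : (0 : ℝ) ≤ r := by exact_mod_cast hr
  have hxp : ∑ k, |(x k : ℝ)| ^ p ≤ (r : ℝ) ^ p := hx
  obtain hlt | heq := (by omega : r ≤ |x i|).lt_or_eq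
  · have : (r : ℝ) ^ p < |(x i : ℝ)| ^ p := by
      gcongr
      exact_mod_cast hlt
    have := single_le_sum (f := fun k => |(x k : ℝ)| ^ p) (fun k _ => by positivity) (mem_univ i)
    linarith
  · have : |(x i : ℝ)| ^ p = (r : ℝ) ^ p := by
      rw [← Int.cast_abs, ← heq]
    obtain ⟨j, hj, hxj⟩ := hbump i heq.symm
    have : 0 < |(x j : ℝ)| ^ p := by positivity
    have := add_le_sum (f := fun k => |(x k : ℝ)| ^ p) (fun k _ => by positivity) (mem_univ i)
      (mem_univ j) hj.symm
    linarith

lemma mem_lpBall_congr {y : ι → ℤ} {q : ℝ} (h : ∀ i, |x i| = |y i|) :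
    x ∈ lpBall ι p q ↔ y ∈ lpBall ι p q := by
  have h' : ∀ i, |(x i : ℝ)| = |(y i : ℝ)| := fun i => by exact_mod_cast h i
  simp only [lpBall, Set.mem_ofPred_eq, h']

lemma isBumpyCube_lpBall (hp : 0 < p) (hr : 0 ≤ r)
    (h : ((Fintype.card ι : ℝ) - 1) * ((r : ℝ) - 1) ^ p + ((r : ℝ) - 2) ^ p ≤ (r : ℝ) ^ p) :
    IsBumpyCube (r - 1) (lpBall ι p r) where
  mem_of_abs_lt _ hx j hj := mem_lpBall_of_abs_lt hp.le h hx j hj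
  mem_of_bump _ _ hi hx := mem_lpBall_of_bump hp.ne' (by simpa using hi) hx
  cube_or_bump _ hx := by simpa using abs_le_or_bump_of_mem_lpBall hp hr hx
  corner_mem _ hx hxm _ hym := (mem_lpBall_congr fun i => (hxm i).trans (hym i).symm).1 hx

end LpBall

/-- For integers `n ≥ 3`, `r ≥ 3` and a real `1 < p < ∞` with
`(n−1)·(r−1)^p + (r−2)^p ≤ r^p`, there is no tiling of `ℤ^n` (equivalently of `ℝ^n` by
the polyomino `T_p^n(r)`) by translates of the `ℓ_p` ball `B_p^n(r)`. -/
theorem no_tiling_Zn (n r : ℕ) (hn : 3 ≤ n) (hr : 3 ≤ r) (p : ℝ) (hp : 1 < p)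
    (h : ((n : ℝ) - 1) * ((r : ℝ) - 1) ^ p + ((r : ℝ) - 2) ^ p ≤ (r : ℝ) ^ p) :
    ¬ ∃ C : Set (Fin n → ℤ), ∀ z : Fin n → ℤ, ∃! c, c ∈ C ∧
        ∑ i, (|z i - c i| : ℝ) ^ p ≤ (r : ℝ) ^ p := by
  rintro ⟨C, hC⟩
  have hB : IsBumpyCube ((r : ℤ) - 1) (lpBall (Fin n) p r) := by
    simpa using isBumpyCube_lpBall (ι := Fin n) (r := r) (zero_lt_one.trans hp) (by omega)
      (by simpa using h)
  have hn' : 3 ≤ ENat.card (Fin n) := by simpa using hn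
  refine hB.not_isTiling (C := C) (by omega) hn' fun z => ?_
  simpa only [lpBall, Set.mem_ofPred_eq, Pi.sub_apply, Int.cast_sub] using hC z
end

section
/- Let m be an odd prime and a an integer not divisible by m. Let C be the cyclic subgroup of (ℤ/m²ℤ)² generated by (1̄, m·a‾). Then |C| = m² and C is a perfect code in the ℓ_∞ metric on (ℤ/m²ℤ)² with radius (m−1)/2: every element of (ℤ/m²ℤ)² lies within ∞-Lee distance (m−1)/2 of exactly one codeword of C. -/
/-- The Lee distance on `ℤ/qℤ`. -/
def dLee {q : ℕ} (x y : ZMod q) : ℕ := min (x - y).val (y - x).val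

/-!
The code generated by `(1, g)` is the kernel of the syndrome `(x, y) ↦ y - g * x`, so it is perfect
as soon as every residue is the syndrome of exactly one short error vector `(e, f)`. For `g = m * a`
and modulus `m ^ 2` the syndrome `f - m * a * e` is a two-digit expansion in balanced base `m`:
`f` is the low digit, and `a` being invertible modulo `m`, `e` is determined by the high one.
-/

/-- Perfect `r`-codes in `(ℤ/qℤ)²` for the `ℓ_∞` Lee distance: the balls of radius `r` around the
codewords partition the space. -/
def IsPerfectLeeCode {q : ℕ} (r : ℕ) (C : Set (ZMod q × ZMod q)) : Prop :=
  ∀ z : ZMod q × ZMod q, ∃! c : ZMod q × ZMod q, c ∈ C ∧ max (dLee z.1 c.1) (dLee z.2 c.2) ≤ r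

/-- The syndrome of a word with respect to the code generated by `(1, g)`, whose codewords are the
words `(x, g * x)`. -/
def syndrome {q : ℕ} (g : ZMod q) : ZMod q × ZMod q →+ ZMod q :=
  AddMonoidHom.snd _ _ - (AddMonoidHom.mulLeft g).comp (AddMonoidHom.fst _ _)

section LeeDistance

variable {q : ℕ} [NeZero q]

theorem dLee_eq_natAbs_valMinAbs (x y : ZMod q) : dLee x y = (x - y).valMinAbs.natAbs := by
  rw [dLee, ← neg_sub x y, ZMod.neg_val, ZMod.valMinAbs_natAbs_eq_min]
  split_ifs with h
  · simp [h]
  · rfl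

theorem dLee_le_iff {x y : ZMod q} {r : ℕ} :
    dLee x y ≤ r ↔ ∃ e : ℤ, e.natAbs ≤ r ∧ (e : ZMod q) = x - y := by
  rw [dLee_eq_natAbs_valMinAbs]
  constructor
  · exact fun h ↦ ⟨_, h, ZMod.coe_valMinAbs _⟩
  · rintro ⟨e, he, hxy⟩
    refine le_trans (ZMod.natAbs_min_of_le_div_two q _ e ?_ (ZMod.natAbs_valMinAbs_le _)) he
    rw [ZMod.coe_valMinAbs, hxy]

theorem isPerfectLeeCode_ker {A : Type*} [AddGroup A] (σ : ZMod q × ZMod q →+ A) {r : ℕ}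
    (hσ : ∀ z, ∃! p : ℤ × ℤ, p.1.natAbs ≤ r ∧ p.2.natAbs ≤ r ∧ σ (p.1, p.2) = σ z) :
    IsPerfectLeeCode r (σ.ker : Set (ZMod q × ZMod q)) := by
  intro z
  obtain ⟨⟨e, f⟩, ⟨he, hf, hef⟩, hunique⟩ := hσ z
  refine ⟨z - ((e : ZMod q), (f : ZMod q)), ⟨?_, ?_⟩, ?_⟩
  · rw [SetLike.mem_coe, AddMonoidHom.mem_ker, map_sub, hef, sub_self]
  · exact max_le (dLee_le_iff.mpr ⟨e, he, by simp⟩) (dLee_le_iff.mpr ⟨f, hf, by simp⟩)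
  · rintro c ⟨hc, hzc⟩
    obtain ⟨⟨e', he', hx⟩, f', hf', hy⟩ := (max_le_iff.mp hzc).imp dLee_le_iff.mp dLee_le_iff.mp
    have herror : ((e' : ZMod q), (f' : ZMod q)) = z - c := Prod.ext hx hy
    have hsyndrome : σ (e', f') = σ z := by
      rw [herror, map_sub, AddMonoidHom.mem_ker.mp hc, sub_zero]
    obtain ⟨rfl, rfl⟩ := Prod.mk.inj (hunique (e', f') ⟨he', hf', hsyndrome⟩)
    rw [herror, sub_sub_cancel]

end LeeDistance

section CyclicCode

variable {q : ℕ} (g : ZMod q)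

theorem syndrome_apply (z : ZMod q × ZMod q) : syndrome g z = z.2 - g * z.1 := rfl

theorem zmultiples_one_prod_eq_ker_syndrome :
    AddSubgroup.zmultiples ((1, g) : ZMod q × ZMod q) = (syndrome g).ker := by
  ext ⟨x, y⟩
  rw [AddSubgroup.mem_zmultiples_iff, AddMonoidHom.mem_ker, syndrome_apply, sub_eq_zero]
  constructor
  · rintro ⟨k, hk⟩
    obtain ⟨rfl, rfl⟩ := Prod.mk.inj hk
    simp [mul_comm]
  · intro (hy : y = g * x)
    obtain ⟨k, rfl⟩ := ZMod.intCast_surjective x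
    exact ⟨k, by simp [hy, mul_comm]⟩

theorem card_zmultiples_one_prod :
    Nat.card (AddSubgroup.zmultiples ((1, g) : ZMod q × ZMod q)) = q := by
  rw [Nat.card_zmultiples, Prod.addOrderOf, ZMod.addOrderOf_one]
  refine Nat.lcm_eq_left (addOrderOf_dvd_of_nsmul_eq_zero ?_)
  rw [nsmul_eq_mul, ZMod.natCast_self, zero_mul]

end CyclicCode

section BalancedDigits

variable {m n r k : ℕ}

theorem existsUnique_natAbs_le_modEq (hn : n = 2 * k + 1) (x : ℤ) :
    ∃! e : ℤ, e.natAbs ≤ k ∧ e ≡ x [ZMOD n] := by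
  have : NeZero n := ⟨by omega⟩
  have isDigit_iff (e : ℤ) : (e.natAbs ≤ k ∧ e ≡ x [ZMOD n]) ↔ (x : ZMod n).valMinAbs = e := by
    rw [ZMod.valMinAbs_spec, ← ZMod.intCast_eq_intCast_iff, Set.mem_Ioc, and_comm, eq_comm]
    exact and_congr_right fun _ ↦ by omega
  simp only [isDigit_iff, existsUnique_eq']

theorem existsUnique_natAbs_le_mul_modEq (hn : n = 2 * k + 1) {a : ℤ} (ha : IsCoprime a n)
    (x : ℤ) : ∃! e : ℤ, e.natAbs ≤ k ∧ a * e ≡ x [ZMOD n] := by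
  obtain ⟨b, c, hbc⟩ := ha
  have hba : b * a ≡ 1 [ZMOD n] := Int.modEq_iff_dvd.mpr ⟨c, by linear_combination -hbc⟩
  have mul_modEq_iff (e : ℤ) : a * e ≡ x [ZMOD n] ↔ e ≡ b * x [ZMOD n] := by
    constructor <;> intro h
    · calc e = 1 * e := (one_mul e).symm
        _ ≡ b * a * e [ZMOD n] := hba.symm.mul_right e
        _ = b * (a * e) := mul_assoc b a e
        _ ≡ b * x [ZMOD n] := h.mul_left b
    · calc a * e ≡ a * (b * x) [ZMOD n] := h.mul_left a
        _ = b * a * x := by ring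
        _ ≡ 1 * x [ZMOD n] := hba.mul_right x
        _ = x := one_mul x
  simpa only [mul_modEq_iff] using existsUnique_natAbs_le_modEq hn (b * x)

theorem existsUnique_add_mul_modEq (hm : m = 2 * r + 1) (hn : n = 2 * k + 1) {a : ℤ}
    (ha : IsCoprime a n) (s : ℤ) :
    ∃! p : ℤ × ℤ, p.1.natAbs ≤ k ∧ p.2.natAbs ≤ r ∧ p.2 + m * (a * p.1) ≡ s [ZMOD m * n] := by
  obtain ⟨f, ⟨hf, hfs⟩, hf_unique⟩ := existsUnique_natAbs_le_modEq hm s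
  obtain ⟨t, rfl⟩ := Int.modEq_iff_add_fac.mp hfs
  obtain ⟨e, ⟨he, het⟩, he_unique⟩ := existsUnique_natAbs_le_mul_modEq hn ha t
  refine ⟨(e, f), ⟨he, hf, (het.mul_left' (c := m)).add_left f⟩, ?_⟩
  rintro ⟨e', f'⟩ ⟨he', hf', h⟩
  have hlow : f' ≡ f + m * t [ZMOD m] := by
    simpa using h.of_dvd (dvd_mul_right (m : ℤ) n)
  obtain rfl : f' = f := hf_unique f' ⟨hf', hlow⟩
  have hhigh : a * e' ≡ t [ZMOD n] :=
    Int.ModEq.mul_left_cancel' (by omega : (m : ℤ) ≠ 0) (h.add_left_cancel' f')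
  rw [he_unique e' ⟨he', hhigh⟩]

end BalancedDigits

theorem isPerfectLeeCode_zmultiples {m r : ℕ} (hm : m = 2 * r + 1) {a : ℤ}
    (ha : IsCoprime a m) :
    IsPerfectLeeCode r (AddSubgroup.zmultiples
      ((1, m * a) : ZMod (m ^ 2) × ZMod (m ^ 2)) : Set (ZMod (m ^ 2) × ZMod (m ^ 2))) := by
  have : NeZero (m ^ 2) := ⟨pow_ne_zero 2 (by omega)⟩
  rw [zmultiples_one_prod_eq_ker_syndrome]
  refine isPerfectLeeCode_ker _ fun z ↦ ?_
  obtain ⟨s, hs⟩ := ZMod.intCast_surjective (syndrome (m * a : ZMod (m ^ 2)) z)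
  have syndrome_eq_iff (e f : ℤ) :
      syndrome (m * a : ZMod (m ^ 2)) (e, f) = syndrome (m * a : ZMod (m ^ 2)) z ↔
        f + m * (-a * e) ≡ s [ZMOD m * m] := by
    rw [← hs, syndrome_apply, ← sq, ← Nat.cast_pow, ← ZMod.intCast_eq_intCast_iff]
    push_cast
    ring_nf
  simpa only [syndrome_eq_iff] using existsUnique_add_mul_modEq hm hm ha.neg_left s

theorem cyclic_perfect_code_general (m : ℕ) (hodd : Odd m) (a : ℤ) (ha : IsCoprime a m) :
    Nat.card (AddSubgroup.zmultiples ((1, m * a) : ZMod (m ^ 2) × ZMod (m ^ 2))) = m ^ 2 ∧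
    IsPerfectLeeCode ((m - 1) / 2) (AddSubgroup.zmultiples
      ((1, m * a) : ZMod (m ^ 2) × ZMod (m ^ 2)) : Set (ZMod (m ^ 2) × ZMod (m ^ 2))) :=
  ⟨card_zmultiples_one_prod _,
    isPerfectLeeCode_zmultiples (by have := Nat.odd_iff.mp hodd; omega) ha⟩

/-- For an odd prime `m` and an integer `a` not divisible by `m`, the cyclic subgroup `C`
of `(ℤ/m²ℤ)²` generated by `(1, m·a)` has `m²` elements and is a perfect code with radius
`(m−1)/2` in the `ℓ_∞` (∞-Lee) metric. -/
theorem cyclic_perfect_code (m : ℕ) (hm : Nat.Prime m) (hodd : Odd m)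
    (a : ℤ) (ha : ¬ ((m : ℤ) ∣ a)) :
    Nat.card (AddSubgroup.zmultiples
        ((1, (m : ZMod (m ^ 2)) * (a : ZMod (m ^ 2))) :
          ZMod (m ^ 2) × ZMod (m ^ 2))) = m ^ 2 ∧
    ∀ z : ZMod (m ^ 2) × ZMod (m ^ 2), ∃! c : ZMod (m ^ 2) × ZMod (m ^ 2),
      c ∈ AddSubgroup.zmultiples
          ((1, (m : ZMod (m ^ 2)) * (a : ZMod (m ^ 2))) :
            ZMod (m ^ 2) × ZMod (m ^ 2)) ∧
      max (dLee z.1 c.1) (dLee z.2 c.2) ≤ (m - 1) / 2 := by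
  exact cyclic_perfect_code_general m hodd a
    ((Nat.prime_iff_prime_int.mp hm).coprime_iff_not_dvd.mpr ha).symm
end
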